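/- arXiv:1806.00517 — 2 statements merged into one kernel-verified Lean document; each statement's English description precedes it below -/
import Mathlib

section
/- Let p = 3 and let N be a prime with N ≡ 1 (mod 3). Then r_K = 1. -/
open scoped TensorProduct

/-- The `p`-rank of a commutative group `G`, i.e. `dim_{𝔽_p}(G ⊗ 𝔽_p)`. -/
noncomputable def pRank (p : ℕ) (G : Type*) [CommGroup G] : ℕ :=
  Module.finrank (ZMod p) (ZMod p ⊗[ℤ] Additive G)

/-- The `p`-rank of the class group of the number field `K`. -/
noncomputable def classRank (p : ℕ) (K : Type*) [Field K] : ℕ :=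
  pRank p (ClassGroup (NumberField.RingOfIntegers K))

/-- `p` is a regular prime: `p` does not divide the class number of `ℚ(ζ_p)`. -/
def RegularPrime (p : ℕ+) : Prop :=
  ¬ (p : ℕ) ∣ Nat.card (ClassGroup (NumberField.RingOfIntegers (CyclotomicField p ℚ)))

/-- `M_i = ∏_{k=1}^{N-1} ∏_{a=1}^{k-1} k^{a^i}` as an element of `𝔽_N = ZMod N`. -/
def Mnum (N i : ℕ) : ZMod N :=
  ∏ k ∈ Finset.Icc 1 (N - 1), ∏ a ∈ Finset.Icc 1 (k - 1), (k : ZMod N) ^ (a ^ i)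

/-- `S_i = ∏_{k=1}^{p-1} ((Mk)!)^{k^i}` with `M = (N-1)/p`, as an element of `ZMod N`. -/
def Snum (p N i : ℕ) : ZMod N :=
  ∏ k ∈ Finset.Icc 1 (p - 1), (Nat.factorial ((N - 1) / p * k) : ZMod N) ^ (k ^ i)

/-- `A_m = ∏_{k=1}^{N-1} k^{k^m}` as an element of `ZMod N`. -/
def Anum (N m : ℕ) : ZMod N :=
  ∏ k ∈ Finset.Icc 1 (N - 1), (k : ZMod N) ^ (k ^ m)

/-- Merel's number `C = ∏_{k=1}^{(N-1)/2} k^k` as an element of `ZMod N`. -/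
def MerelC (N : ℕ) : ZMod N :=
  ∏ k ∈ Finset.Icc 1 ((N - 1) / 2), (k : ZMod N) ^ k

/-- `x` is a `p`-th power in `𝔽_N`. -/
def IsPthPow (p : ℕ) {N : ℕ} (x : ZMod N) : Prop :=
  ∃ y : ZMod N, y ^ p = x

open scoped TensorProduct nonZeroDivisors

theorem aux_pRank (G : Type*) [CommGroup G] [Finite G] (h3 : 3 ∣ Nat.card G)
    (ht : Nat.card {g : G // g ^ 3 = 1} ≤ 3) : pRank 3 G = 1 := by
  have : Fact (Nat.Prime 3) := ⟨Nat.prime_three⟩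
  -- torsion has exactly three elements
  let f : G →* G := powMonoidHom 3
  have hker : Nat.card f.ker ≤ 3 := by
    refine le_trans (le_of_eq (Nat.card_congr ?_)) ht
    exact Equiv.subtypeEquivRight (fun g => by simp [f, MonoidHom.mem_ker])
  have hker3 : Nat.card f.ker = 3 := by
    obtain ⟨x, hx⟩ := exists_prime_orderOf_dvd_card' 3 h3
    have hxk : Subgroup.zpowers x ≤ f.ker := by
      rw [Subgroup.zpowers_le, MonoidHom.mem_ker]
      simp [f, ← hx, pow_orderOf_eq_one]
    have := Subgroup.card_dvd_of_le hxk
    rw [Nat.card_zpowers, hx] at this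
    have := Nat.le_of_dvd Nat.card_pos this
    omega
  have hidx : f.range.index = 3 := by
    have h1 := f.range.index_mul_card
    have h2 := f.ker.index_mul_card
    rw [Subgroup.index_ker, hker3] at h2
    have : 0 < Nat.card f.range := Nat.card_pos
    nlinarith
  -- tensor product
  have hmod : Nat.card (ZMod 3 ⊗[ℤ] Additive G) = 3 := by
    let I : Ideal ℤ := Ideal.span {(3:ℤ)}
    let e0 : (ZMod 3) ≃ₗ[ℤ] (ℤ ⧸ I) :=
      ((Int.quotientSpanNatEquivZMod 3).symm.toAddEquiv).toIntLinearEquiv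
    let e1 : ZMod 3 ⊗[ℤ] Additive G ≃ₗ[ℤ] (ℤ ⧸ I) ⊗[ℤ] Additive G :=
      TensorProduct.congr e0 (LinearEquiv.refl _ _)
    let e2 := TensorProduct.quotTensorEquivQuotSMul (Additive G) I
    rw [Nat.card_congr (e1.trans e2).toEquiv]
    rw [← hidx, ← Subgroup.index_toAddSubgroup]
    have hS : (I • (⊤ : Submodule ℤ (Additive G))).toAddSubgroup =
        Subgroup.toAddSubgroup f.range := by
      ext x
      rw [Submodule.mem_toAddSubgroup, Submodule.ideal_span_singleton_smul,
        Submodule.mem_smul_pointwise_iff_exists]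
      constructor
      · rintro ⟨y, -, rfl⟩
        exact ⟨y.toMul, (zpow_natCast y.toMul 3).symm⟩
      · rintro ⟨y, hy⟩
        exact ⟨Additive.ofMul y, trivial, (zpow_natCast y 3).trans hy⟩
    rw [← hS]
    rfl
  have hfin : Finite (ZMod 3 ⊗[ℤ] Additive G) := Nat.finite_of_card_ne_zero (by omega)
  have := Module.natCard_eq_pow_finrank (K := ZMod 3) (V := ZMod 3 ⊗[ℤ] Additive G)
  rw [hmod, Nat.card_zmod] at this
  exact Nat.pow_right_injective (by norm_num : 2 ≤ 3) (by simpa [pRank] using this.symm)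

theorem aux_torsion {C D : Type*} [CommGroup C] [Finite C] [CommGroup D] [Finite D]
    (j : C →* D) (s t : D →* D)
    (hj : ∀ c, c ^ 3 = 1 → j c = 1 → c = 1)
    (htj : ∀ c, t (j c) = j c) (hts : ∀ c, t (s (j c)) = s (s (j c)))
    (hN : ∀ c, j c * s (j c) * s (s (j c)) = 1)
    (hA : Nat.card {x : D // s x = x} ≤ 3) :
    Nat.card {c : C // c ^ 3 = 1} ≤ 3 := by
  let T : Subgroup C := (powMonoidHom 3 : C →* C).ker
  have hT : ∀ c : C, c ∈ T ↔ c ^ 3 = 1 := fun c => by simp [T, MonoidHom.mem_ker]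
  let f : T →* D := (j.comp T.subtype) / (s.comp (j.comp T.subtype))
  have hf : ∀ c : T, f c = j c / s (j c) := fun c => rfl
  have key : ∀ c : T, j c ^ 3 = 1 := fun c => by rw [← map_pow, (hT c).1 c.2, map_one]
  have h1 : Nat.card {c : C // c ^ 3 = 1} = Nat.card T :=
    Nat.card_congr (Equiv.subtypeEquivRight (fun c => (hT c).symm))
  have h2 : Nat.card T = Nat.card f.range * Nat.card f.ker := by
    rw [← f.ker.index_mul_card, Subgroup.index_ker]
  rw [h1, h2, mul_comm, ← Nat.card_prod]
  refine le_trans ?_ hA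
  have hsf : ∀ c : T, s (f c) = f c := by
    intro c
    have k1 := key c
    have k2 := hN c
    rw [hf, map_div, div_eq_div_iff_mul_eq_mul]
    have k3 : s (j c) ^ 3 = 1 := by rw [← map_pow, k1, map_one]
    calc s (j c) * s (j c) = s (j c) ^ 3 * (s (j c))⁻¹ := by rw [pow_succ, mul_inv_cancel_right, sq]
      _ = (s (j c))⁻¹ := by rw [k3, one_mul]
      _ = j c * s (s (j c)) := by
        rw [inv_eq_iff_mul_eq_one, ← k2]
        simp only [mul_comm, mul_left_comm, mul_assoc]
  have htf : ∀ c : T, t (f c) = (f c)⁻¹ := by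
    intro c
    have k1 := key c
    have k2 := hN c
    rw [hf, map_div, htj, hts, inv_div, div_eq_div_iff_mul_eq_mul]
    calc j c * j c = j c ^ 3 * (j c)⁻¹ := by rw [pow_succ, mul_inv_cancel_right, sq]
      _ = (j c)⁻¹ := by rw [k1, one_mul]
      _ = _ := by
        rw [inv_eq_iff_mul_eq_one, ← k2]
        simp only [mul_comm, mul_left_comm, mul_assoc]
  have hker : ∀ c : f.ker, s (j c) = j c := by
    intro c
    have := c.2
    rw [MonoidHom.mem_ker, hf, div_eq_one] at this
    exact this.symm
  let F : f.ker × f.range → {x : D // s x = x} := fun p => ⟨j p.1 * p.2, by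
    obtain ⟨c, ⟨_, ⟨d, rfl⟩⟩⟩ := p
    simp only [map_mul, hker, hsf]⟩
  refine Nat.card_le_card_of_injective F ?_
  rintro ⟨c, ⟨_, ⟨d, rfl⟩⟩⟩ ⟨c', ⟨_, ⟨d', rfl⟩⟩⟩ h
  have h : j c * f d = j c' * f d' := congrArg Subtype.val h
  have h' : j c * (f d)⁻¹ = j c' * (f d')⁻¹ := by
    have := congrArg t h
    simpa only [map_mul, htj, htf] using this
  have hjj : (j c / j c') ^ 2 = 1 := by
    have : (j c * f d) * (j c * (f d)⁻¹) = (j c' * f d') * (j c' * (f d')⁻¹) := by rw [h, h']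
    have e1 : (j c * f d) * (j c * (f d)⁻¹) = j c ^ 2 := by
      rw [mul_mul_mul_comm, mul_inv_cancel, mul_one, sq]
    have e2 : (j c' * f d') * (j c' * (f d')⁻¹) = j c' ^ 2 := by
      rw [mul_mul_mul_comm, mul_inv_cancel, mul_one, sq]
    rw [e1, e2] at this
    rw [div_pow, this, div_self']
  have hjj3 : (j c / j c') ^ 3 = 1 := by
    rw [div_pow, key c.1, key c'.1, div_self']
  have hjc : j c / j c' = 1 := by
    have : (j c / j c') ^ 3 = (j c / j c') ^ 2 * (j c / j c') := pow_succ _ _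
    rw [hjj3, hjj, one_mul] at this
    exact this.symm
  have hcc : (c : C) / (c' : C) = 1 := by
    apply hj
    · rw [div_pow, (hT _).1 c.1.2, (hT _).1 c'.1.2, div_self']
    · rw [map_div, hjc]
  have hc : c = c' := Subtype.ext (Subtype.ext (div_eq_one.1 hcc))
  subst hc
  have := mul_left_cancel h
  simp only [this]

open scoped TensorProduct nonZeroDivisors

set_option linter.unusedSectionVars false
set_option linter.style.haveILetI false
section Core
variable {R : Type*} [CommRing R] [IsDedekindDomain R]

/-- The map on class groups induced by an injective ring homomorphism. -/
noncomputable def clHom {A B : Type*} [CommRing A] [CommRing B] [IsDomain A] [IsDomain B]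
    (f : A →+* B) (hf : Function.Injective f) : ClassGroup A →* ClassGroup B :=
  letI : Algebra A B := f.toAlgebra
  haveI : FaithfulSMul A B := (faithfulSMul_iff_algebraMap_injective A B).2 hf
  ClassGroup.extendedHom A B

/-- The endomorphism of the class group induced by a ring automorphism. -/
noncomputable def clMap (s : R ≃+* R) : ClassGroup R →* ClassGroup R :=
  clHom (s : R →+* R) s.injective

/-- The class of a nonzero ideal. -/
noncomputable def cls (I : Ideal R) (h : I ≠ ⊥) : ClassGroup R :=
  ClassGroup.mk0 ⟨I, mem_nonZeroDivisors_of_ne_zero h⟩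

theorem map_ne_bot' (s : R ≃+* R) {I : Ideal R} (h : I ≠ ⊥) : I.map s ≠ ⊥ :=
  (Ideal.map_eq_bot_iff_of_injective s.injective).not.2 h

theorem map_ne_bot'' {A B : Type*} [CommRing A] [CommRing B] (f : A →+* B)
    (hf : Function.Injective f) {I : Ideal A} (h : I ≠ ⊥) : I.map f ≠ ⊥ :=
  (Ideal.map_eq_bot_iff_of_injective hf).not.2 h

theorem clHom_cls {A B : Type*} [CommRing A] [CommRing B] [IsDedekindDomain A]
    [IsDedekindDomain B] (f : A →+* B) (hf : Function.Injective f) (I : Ideal A) (h : I ≠ ⊥) :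
    clHom f hf (cls I h) = cls (I.map f) (map_ne_bot'' f hf h) := by
  let : Algebra A B := f.toAlgebra
  have : FaithfulSMul A B := (faithfulSMul_iff_algebraMap_injective A B).2 hf
  exact ClassGroup.extendedHom_mk0 A B ⟨I, mem_nonZeroDivisors_of_ne_zero h⟩

theorem clMap_cls (s : R ≃+* R) (I : Ideal R) (h : I ≠ ⊥) :
    clMap s (cls I h) = cls (I.map s) (map_ne_bot' s h) :=
  clHom_cls (s : R →+* R) s.injective I h

theorem map3 (s : R ≃+* R) (hs3 : ∀ x, s (s (s x)) = x) (J : Ideal R) :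
    ((J.map s).map s).map s = J := by
  change ((J.map (s : R →+* R)).map (s : R →+* R)).map (s : R →+* R) = J
  rw [Ideal.map_map, Ideal.map_map]
  convert Ideal.map_id J
  ext x
  simp [hs3]

theorem exists_cls (c : ClassGroup R) : ∃ I h, c = cls I h := by
  obtain ⟨⟨I, hI⟩, rfl⟩ := ClassGroup.mk0_surjective c
  exact ⟨I, nonZeroDivisors.ne_zero hI, rfl⟩

theorem cls_mul (I J : Ideal R) (hI : I ≠ ⊥) (hJ : J ≠ ⊥) (h : I * J ≠ ⊥) :
    cls (I * J) h = cls I hI * cls J hJ := by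
  unfold cls
  rw [← map_mul]
  rfl

theorem cls_pow (I : Ideal R) (hI : I ≠ ⊥) (n : ℕ) (h : I ^ n ≠ ⊥) :
    cls (I ^ n) h = cls I hI ^ n := by
  unfold cls
  rw [← map_pow]
  rfl

theorem cls_congr {I J : Ideal R} (h : I = J) (hI : I ≠ ⊥) (hJ : J ≠ ⊥) :
    cls I hI = cls J hJ := by
  subst h; rfl

theorem cls_span (d : R) (h : Ideal.span {d} ≠ ⊥) : cls (Ideal.span {d}) h = 1 := by
  unfold cls
  rw [ClassGroup.mk0_eq_one_iff]
  exact ⟨d, rfl⟩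

theorem cls_eq_one {I : Ideal R} {h : I ≠ ⊥} (hc : cls I h = 1) : ∃ d, I = Ideal.span {d} := by
  unfold cls at hc
  rw [ClassGroup.mk0_eq_one_iff] at hc
  obtain ⟨d, hd⟩ := hc
  exact ⟨d, hd⟩

theorem cls_eq_cls {I J : Ideal R} {hI : I ≠ ⊥} {hJ : J ≠ ⊥} (h : cls I hI = cls J hJ) :
    ∃ x y : R, x ≠ 0 ∧ y ≠ 0 ∧ Ideal.span {x} * I = Ideal.span {y} * J := by
  obtain ⟨x, y, hx, hy, h⟩ := ClassGroup.mk0_eq_mk0_iff.1 h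
  exact ⟨x, y, hx, hy, h⟩

theorem span_ne_bot {d : R} (h : d ≠ 0) : Ideal.span {d} ≠ ⊥ := by simpa using h

theorem hilbert90' (s : R ≃+* R) (hs3 : ∀ x, s (s (s x)) = x) (w a : R)
    (hw : w ^ 2 + w + 1 = 0) (ha0 : a ≠ 0) (hsw : s w = w) (hsa : s a = w * a) (h3 : (3 : R) ≠ 0)
    (x y : R) (hy : y ≠ 0) (hN : x * s x * s (s x) = y * s y * s (s y)) :
    ∃ z, z ≠ 0 ∧ x * s z = y * z := by
  let z : R → R := fun t =>
    y * s y * s (s y) * t + x * s y * s (s y) * s t + x * s x * s (s y) * s (s t)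
  have hz : ∀ t, x * s (z t) = y * z t := by
    intro t
    simp only [z, map_add, map_mul, hs3]
    linear_combination y * t * hN
  by_contra hcon
  push Not at hcon
  have hz0 : ∀ t, z t = 0 := fun t => by
    by_contra h
    exact hcon _ h (hz t)
  have e0 := hz0 1
  have e1 := hz0 a
  have e2 := hz0 (a ^ 2)
  simp only [z, map_one, map_pow, hsa, map_mul, hsw, mul_one] at e0 e1 e2
  have e1' : y * s y * s (s y) + x * s y * s (s y) * w + x * s x * s (s y) * (w * w) = 0 := by
    apply mul_left_cancel₀ ha0
    linear_combination e1
  have e2' : y * s y * s (s y) + x * s y * s (s y) * w ^ 2 +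
      x * s x * s (s y) * (w * w) ^ 2 = 0 := by
    apply mul_left_cancel₀ (pow_ne_zero 2 ha0)
    linear_combination e2
  have : (3 : R) * (y * s y * s (s y)) = 0 := by
    linear_combination e0 + e1' + e2' - hw * (x * s y * s (s y)) -
      hw * (x * s x * s (s y)) * (w ^ 2 - w + 1)
  have hsy : s y ≠ 0 := by simpa using hy
  have hssy : s (s y) ≠ 0 := by simpa using hy
  exact mul_ne_zero h3 (mul_ne_zero (mul_ne_zero hy hsy) hssy) this

theorem invariant_form (s : R ≃+* R) (hs3 : ∀ x, s (s (s x)) = x)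
    (P1 P2 Q : Ideal R) (h1 : P1 ≠ ⊥) (h2 : P2 ≠ ⊥) (hQ0 : Q ≠ ⊥)
    (hsP1 : P1.map s = P1) (hsP2 : P2.map s = P2)
    (hsQ : Q.map s = Q)
    (F0 : ∀ I : Ideal R, I ≠ ⊥ → ∃ d, d ≠ 0 ∧ s d = d ∧
      I * I.map s * (I.map s).map s = Ideal.span {d})
    (F1 : ∀ P : Ideal R, P.IsPrime → P ≠ ⊥ → P.map s = P →
      P = P1 ∨ P = P2 ∨ P = Q ∨ ∃ d, s d = d ∧ P = Ideal.span {d})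
    (I : Ideal R) (hI : I ≠ ⊥) (hsI : I.map s = I) :
    ∃ (d : R) (i j l : ℕ), d ≠ 0 ∧ s d = d ∧ I = Ideal.span {d} * P1 ^ i * P2 ^ j * Q ^ l := by
  induction I using WellFoundedGT.induction with
  | ind I IH =>
  by_cases hT : I = ⊤
  · exact ⟨1, 0, 0, 0, one_ne_zero, map_one s, by simp [hT]⟩
  obtain ⟨P, hPmax, hIP⟩ := Ideal.exists_le_maximal I hT
  have hP0 : P ≠ ⊥ := fun h => hI (le_bot_iff.1 (h ▸ hIP))
  -- general step
  have step : ∀ A : Ideal R, A ≠ ⊤ → A ≠ ⊥ → A.map s = A → A ∣ I →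
      (∃ (d : R) (i j l : ℕ), d ≠ 0 ∧ s d = d ∧ A = Ideal.span {d} * P1 ^ i * P2 ^ j * Q ^ l) →
      ∃ (d : R) (i j l : ℕ), d ≠ 0 ∧ s d = d ∧
        I = Ideal.span {d} * P1 ^ i * P2 ^ j * Q ^ l := by
    rintro A hAT hA0 hsA ⟨I', hI'⟩ ⟨d, i, j, l, hd0, hd, hA⟩
    have hI'0 : I' ≠ ⊥ := fun h => hI (by rw [hI', h, Ideal.mul_bot])
    have hlt : I < I' := by
      refine lt_of_le_of_ne (hI' ▸ Ideal.mul_le_right) ?_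
      intro h
      apply hAT
      have : A * I' = 1 * I' := by rw [← hI', one_mul, h]
      exact (mul_right_cancel₀ hI'0 this).trans Ideal.one_eq_top
    have hsI' : I'.map s = I' := by
      have : A * I'.map s = A * I' := by
        conv_lhs => rw [← hsA, ← Ideal.map_mul, ← hI', hsI, hI']
      exact mul_left_cancel₀ hA0 this
    obtain ⟨d', i', j', l', hd0', hd', hI''⟩ := IH I' hlt hI'0 hsI'
    refine ⟨d * d', i + i', j + j', l + l', mul_ne_zero hd0 hd0', by rw [map_mul, hd, hd'], ?_⟩
    rw [hI', hA, hI'', ← Ideal.span_singleton_mul_span_singleton]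
    ring
  have hPI : P ∣ I := Ideal.dvd_iff_le.2 hIP
  by_cases hsP : P.map s = P
  · apply step P hPmax.ne_top hP0 hsP hPI
    rcases F1 P hPmax.isPrime hP0 hsP with h | h | h | ⟨d, hd, h⟩
    · exact ⟨1, 1, 0, 0, one_ne_zero, map_one s, by simp [h]⟩
    · exact ⟨1, 0, 1, 0, one_ne_zero, map_one s, by simp [h]⟩
    · exact ⟨1, 0, 0, 1, one_ne_zero, map_one s, by simp [h]⟩
    · refine ⟨d, 0, 0, 0, ?_, hd, by simp [h]⟩
      rintro rfl
      exact hP0 (by simp [h])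
  · obtain ⟨d, hd0, hd, hN⟩ := F0 P hP0
    have m3 := map3 s hs3
    have hp : ∀ J : Ideal R, J.IsMaximal → J ≠ ⊥ → Prime J := fun J h h0 =>
      Ideal.prime_of_isPrime h0 h.isPrime
    have hmaxs : ∀ J : Ideal R, J.IsMaximal → (J.map s).IsMaximal := fun J h =>
      Ideal.map_isMaximal_of_equiv s
    have hm1 := hmaxs P hPmax
    have hm2 := hmaxs _ hm1
    have hd1 : P.map s ∣ I := by
      rw [Ideal.dvd_iff_le, ← hsI]; exact Ideal.map_mono hIP
    have hd2 : (P.map s).map s ∣ I := by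
      rw [Ideal.dvd_iff_le, ← hsI]; exact Ideal.map_mono (Ideal.dvd_iff_le.1 hd1)
    have hne2 : (P.map s).map s ≠ P := fun h => hsP (by
      have := congrArg (Ideal.map s) h
      rw [m3] at this; exact this.symm)
    have hne12 : (P.map s).map s ≠ P.map s := fun h => hsP (by
      have := congrArg (fun J => (Ideal.map s (Ideal.map s J))) h
      simp only [m3] at this; exact this)
    have cop : ∀ J J' : Ideal R, J.IsMaximal → J'.IsMaximal → J ≠ J' → IsCoprime J J' := by
      intro J J' h h' hne
      exact Ideal.isCoprime_iff_sup_eq.2 (h.coprime_of_ne h' hne)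
    have hdvd : P * P.map s * (P.map s).map s ∣ I := by
      apply IsCoprime.mul_dvd _ _ hd2
      · exact (cop _ _ hPmax hm2 hne2.symm).mul_left (cop _ _ hm1 hm2 hne12.symm)
      · exact (cop _ _ hPmax hm1 (Ne.symm hsP)).mul_dvd hPI hd1
    rw [hN] at hdvd
    apply step _ _ (span_ne_bot hd0) _ hdvd
    · exact ⟨d, 0, 0, 0, hd0, hd, by simp⟩
    · rw [← hN]
      intro h
      exact hPmax.ne_top (top_le_iff.1 (h ▸ (Ideal.mul_le_left.trans Ideal.mul_le_left)))
    · rw [Ideal.map_span]; simp [hd]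
end Core

open scoped TensorProduct nonZeroDivisors

theorem card_le_three_of_pow {D : Type*} [CommGroup D] (A : D → Prop) (g : D) (hg : g ^ 3 = 1)
    (h : ∀ c, A c → ∃ n : ℕ, c = g ^ n) : Nat.card {c // A c} ≤ 3 := by
  have : ∀ c : {c // A c}, ∃ n : Fin 3, c.1 = g ^ (n : ℕ) := by
    rintro ⟨c, hc⟩
    obtain ⟨n, rfl⟩ := h c hc
    refine ⟨⟨n % 3, Nat.mod_lt _ (by norm_num)⟩, ?_⟩
    exact pow_eq_pow_mod n hg
  choose f hf using this
  have hinj : Function.Injective f := by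
    intro c c' h
    apply Subtype.ext
    rw [hf, hf, h]
  simpa using Nat.card_le_card_of_injective f hinj

set_option linter.unusedSectionVars false
section Core2
variable {R : Type*} [CommRing R] [IsDedekindDomain R]

/-- Auxiliary relation. -/
def RelC (s : R ≃+* R) (w : R) (c : ClassGroup R) (i : ℕ) : Prop :=
  ∃ (I : Ideal R) (h : I ≠ ⊥) (x y : R), c = cls I h ∧ x ≠ 0 ∧ y ≠ 0 ∧
    Ideal.span {x} * I = Ideal.span {y} * I.map s ∧
    x * s x * s (s x) = w ^ i * (y * s y * s (s y))

theorem RelC.mul {s : R ≃+* R} {w : R} {c c' : ClassGroup R} {i i' : ℕ} (h : RelC s w c i)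
    (h' : RelC s w c' i') : RelC s w (c * c') (i + i') := by
  obtain ⟨I, hI, x, y, hc, hx, hy, h1, h2⟩ := h
  obtain ⟨I', hI', x', y', hc', hx', hy', h1', h2'⟩ := h'
  refine ⟨I * I', mul_ne_zero hI hI', x * x', y * y', ?_, mul_ne_zero hx hx', mul_ne_zero hy hy',
    ?_, ?_⟩
  · rw [cls_mul I I' hI hI', hc, hc']
  · rw [Ideal.map_mul, ← Ideal.span_singleton_mul_span_singleton,
      ← Ideal.span_singleton_mul_span_singleton]
    calc _ = (Ideal.span {x} * I) * (Ideal.span {x'} * I') := by ring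
      _ = _ := by rw [h1, h1']; ring
  · simp only [map_mul]
    calc _ = (x * s x * s (s x)) * (x' * s x' * s (s x')) := by ring
      _ = _ := by rw [h2, h2']; ring

theorem RelC.pow {s : R ≃+* R} {w : R} {c : ClassGroup R} {i : ℕ} (h : RelC s w c i) (n : ℕ)
    (hn : n ≠ 0) : RelC s w (c ^ n) (n * i) := by
  induction n with
  | zero => exact absurd rfl hn
  | succ n ih =>
    by_cases h0 : n = 0
    · subst h0; simpa using h
    · have := (ih h0).mul h
      rwa [← pow_succ, ← Nat.succ_mul] at this

theorem w_cube {w : R} (hw : w ^ 2 + w + 1 = 0) : w ^ 3 = 1 := by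
  linear_combination (w - 1) * hw

theorem core [Finite (ClassGroup R)] (s : R ≃+* R) (hs3 : ∀ x, s (s (s x)) = x) (w a : R)
    (hw : w ^ 2 + w + 1 = 0) (hsw : s w = w) (ha0 : a ≠ 0) (hsa : s a = w * a)
    (h3 : (3 : R) ≠ 0) (P1 P2 Q : Ideal R) (hP : P1 * P2 = Ideal.span {a})
    (hsP1 : P1.map s = P1) (hQ0 : Q ≠ ⊥) (hsQ : Q.map s = Q)
    (F0 : ∀ I : Ideal R, I ≠ ⊥ → ∃ d, d ≠ 0 ∧ s d = d ∧
      I * I.map s * (I.map s).map s = Ideal.span {d})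
    (F1 : ∀ P : Ideal R, P.IsPrime → P ≠ ⊥ → P.map s = P →
      P = P1 ∨ P = P2 ∨ P = Q ∨ ∃ d, s d = d ∧ P = Ideal.span {d})
    (F2 : ∀ u, IsUnit u → s u = u → ∃ i : ℕ, u = w ^ i ∨ u = - w ^ i)
    (F3 : ∃ η, IsUnit η ∧ ∀ u, IsUnit u → ∀ i : ℕ, η * s u ≠ w ^ i * u ∧ η * s u ≠ -(w ^ i * u))
    (F4 : Q = ⊤ ∨ ∀ x y, x ≠ 0 → y ≠ 0 → x * s x * s (s x) ≠ w * (y * s y * s (s y))) :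
    Nat.card {c : ClassGroup R // clMap s c = c} ≤ 3 := by
  have hw3 : w ^ 3 = 1 := w_cube hw
  have hwu : IsUnit w := IsUnit.of_pow_eq_one hw3 (by norm_num)
  have hP12 : P1 * P2 ≠ ⊥ := hP ▸ span_ne_bot ha0
  have h1 : P1 ≠ ⊥ := left_ne_zero_of_mul hP12
  have h2 : P2 ≠ ⊥ := right_ne_zero_of_mul hP12
  have hsP2 : P2.map s = P2 := by
    have : P1 * P2.map s = P1 * P2 := by
      conv_lhs => rw [← hsP1, ← Ideal.map_mul, hP, Ideal.map_span]
      rw [hP]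
      simp only [Set.image_singleton, hsa]
      exact Ideal.span_singleton_mul_left_unit hwu a
    exact mul_left_cancel₀ h1 this
  -- cubes of invariant ideals
  have cube : ∀ I : Ideal R, I ≠ ⊥ → I.map s = I → ∃ d, d ≠ 0 ∧ s d = d ∧ I ^ 3 = Ideal.span {d} := by
    intro I hI hsI
    obtain ⟨d, h0, hd, h⟩ := F0 I hI
    rw [hsI, hsI] at h
    exact ⟨d, h0, hd, by rw [← h]; ring⟩
  have cube1 : ∀ I : Ideal R, ∀ hI : I ≠ ⊥, I.map s = I → cls I hI ^ 3 = 1 := by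
    intro I hI hsI
    obtain ⟨d, h0, hd, h⟩ := cube I hI hsI
    rw [← cls_pow I hI 3 (h ▸ span_ne_bot h0), cls_congr h _ (span_ne_bot h0), cls_span]
  set P := cls P1 h1 with hPdef
  set L := cls Q hQ0 with hLdef
  have hPc : P ^ 3 = 1 := cube1 _ _ hsP1
  have hLc : L ^ 3 = 1 := cube1 _ _ hsQ
  have hP2c : cls P2 h2 = P ^ 2 := by
    have e : P * cls P2 h2 = 1 := by
      rw [hPdef, ← cls_mul P1 P2 h1 h2 hP12, cls_congr hP _ (span_ne_bot ha0), cls_span]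
    calc cls P2 h2 = P ^ 3 * cls P2 h2 := by rw [hPc, one_mul]
      _ = P ^ 2 * (P * cls P2 h2) := by rw [pow_succ, mul_assoc]
      _ = P ^ 2 := by rw [e, mul_one]
  have form : ∀ (I : Ideal R) (hI : I ≠ ⊥) (d : R) (i j l : ℕ), d ≠ 0 →
      I = Ideal.span {d} * P1 ^ i * P2 ^ j * Q ^ l → cls I hI = P ^ (i + 2 * j) * L ^ l := by
    intro I hI d i j l hd h
    have n1 : Ideal.span {d} * P1 ^ i * P2 ^ j * Q ^ l ≠ ⊥ := h ▸ hI
    have n2 := left_ne_zero_of_mul n1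
    have n3 := left_ne_zero_of_mul n2
    rw [cls_congr h hI n1, cls_mul _ _ n2 (pow_ne_zero _ hQ0), cls_mul _ _ n3 (pow_ne_zero _ h2),
      cls_mul _ _ (span_ne_bot hd) (pow_ne_zero _ h1), cls_span, cls_pow _ hQ0, cls_pow _ h2,
      cls_pow _ h1, hP2c, one_mul, ← pow_mul, ← pow_add]
  have inv := invariant_form s hs3 P1 P2 Q h1 h2 hQ0 hsP1 hsP2 hsQ F0 F1
  -- key step
  have key : ∀ c k, RelC s w c (3 * k) → ∃ n l, c = P ^ n * L ^ l := by
    rintro c k ⟨I, hI, x, y, rfl, hx, hy, e1, e2⟩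
    rw [pow_mul, hw3, one_pow, one_mul] at e2
    obtain ⟨z, hz, hxz⟩ := hilbert90' s hs3 w a hw ha0 hsw hsa h3 x y hy e2
    have hJ : Ideal.span {z} * I ≠ ⊥ := mul_ne_zero (span_ne_bot hz) hI
    have hsJ : (Ideal.span {z} * I).map s = Ideal.span {z} * I := by
      have : Ideal.span {y} * (Ideal.span {z} * I).map s = Ideal.span {y} * (Ideal.span {z} * I) := by
        rw [Ideal.map_mul, Ideal.map_span, Set.image_singleton]
        calc _ = Ideal.span {s z} * (Ideal.span {y} * I.map s) := by ring
          _ = (Ideal.span {x} * Ideal.span {s z}) * I := by rw [← e1]; ring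
          _ = _ := by
            rw [Ideal.span_singleton_mul_span_singleton, hxz,
              ← Ideal.span_singleton_mul_span_singleton, mul_assoc]
      exact mul_left_cancel₀ (span_ne_bot hy) this
    obtain ⟨d, i, j, l, hd0, -, hd⟩ := inv _ hJ hsJ
    have := form _ hJ d i j l hd0 hd
    rw [cls_mul _ _ (span_ne_bot hz) hI, cls_span, one_mul] at this
    exact ⟨_, _, this⟩
  -- existence
  have exi : ∀ c, clMap s c = c → ∃ i, RelC s w c i := by
    intro c hc
    obtain ⟨I, hI, rfl⟩ := exists_cls c
    rw [clMap_cls] at hc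
    obtain ⟨y, x, hy, hx, e⟩ := cls_eq_cls hc
    have hsx : s x ≠ 0 := by simpa using hx
    have hssx : s (s x) ≠ 0 := by simpa using hx
    have hsy : s y ≠ 0 := by simpa using hy
    have hssy : s (s y) ≠ 0 := by simpa using hy
    have hNy : y * s y * s (s y) ≠ 0 := mul_ne_zero (mul_ne_zero hy hsy) hssy
    have hspan : Ideal.span {x * s x * s (s x)} = Ideal.span {y * s y * s (s y)} := by
      have e' := congrArg (Ideal.map s) e
      have e'' := congrArg (Ideal.map s) e'
      simp only [Ideal.map_mul, Ideal.map_span, Set.image_singleton, map3 s hs3] at e' e''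
      have hI1 := map_ne_bot' s hI
      have hI2 := map_ne_bot' s hI1
      have hM : I * I.map s * (I.map s).map s ≠ ⊥ := mul_ne_zero (mul_ne_zero hI hI1) hI2
      have : Ideal.span {x * s x * s (s x)} * (I * I.map s * (I.map s).map s) =
          Ideal.span {y * s y * s (s y)} * (I * I.map s * (I.map s).map s) := by
        simp only [← Ideal.span_singleton_mul_span_singleton]
        calc _ = (Ideal.span {x} * I) * (Ideal.span {s x} * I.map s) *
              (Ideal.span {s (s x)} * (I.map s).map s) := by ring
          _ = _ := by rw [← e, ← e', ← e'']; ring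
      exact mul_right_cancel₀ hM this
    obtain ⟨u, hu⟩ := (Ideal.span_singleton_eq_span_singleton.1 hspan).symm
    have hsu : s (u : R) = u := by
      have := congrArg s hu
      simp only [map_mul, hs3] at this
      apply mul_left_cancel₀ hNy
      linear_combination this - hu
    obtain ⟨i, h | h⟩ := F2 u u.isUnit hsu
    · exact ⟨i, I, hI, x, y, rfl, hx, hy, e.symm, by rw [← hu, h]; ring⟩
    · refine ⟨i, I, hI, -x, y, rfl, neg_ne_zero.2 hx, hy, by rw [Ideal.span_singleton_neg]; exact e.symm, ?_⟩
      simp only [map_neg]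
      rw [h] at hu
      linear_combination hu
  by_cases hu : ∃ u, IsUnit u ∧ u * s u * s (s u) = w
  · obtain ⟨u, huu, hNu⟩ := hu
    have hQ : Q = ⊤ := by
      rcases F4 with h | h
      · exact h
      · exact absurd (by simpa using hNu) (h u 1 huu.ne_zero one_ne_zero)
    have hL1 : L = 1 := by
      have : Q = Ideal.span {1} := by simp [hQ]
      rw [hLdef, cls_congr this hQ0 (span_ne_bot one_ne_zero), cls_span]
    refine card_le_three_of_pow _ P hPc ?_
    intro c hc
    obtain ⟨i, hi⟩ := exi c hc
    have r1 : RelC s w 1 1 := by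
      refine ⟨⊤, top_ne_bot, u, 1, ?_, huu.ne_zero, one_ne_zero, ?_, by simpa using hNu⟩
      · rw [cls_congr Ideal.span_singleton_one.symm top_ne_bot (span_ne_bot one_ne_zero), cls_span]
      · rw [Ideal.span_singleton_eq_top.2 huu, Ideal.map_top, Ideal.span_singleton_one]
    have r2 : RelC s w c (3 * i) := by
      by_cases h0 : i = 0
      · subst h0; exact hi
      · have := hi.mul (r1.pow (2 * i) (by omega))
        convert this using 1
        · simp
        · ring
    obtain ⟨n, l, h⟩ := key c i r2
    exact ⟨n, by rw [h, hL1, one_pow, mul_one]⟩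
  · -- relation
    obtain ⟨η, hη, hη2⟩ : ∃ η, IsUnit η ∧ (η * s η * s (s η) = 1) ∧
        ∀ u, IsUnit u → ∀ i : ℕ, η * s u ≠ w ^ i * u := by
      obtain ⟨η, hη, hη2⟩ := F3
      have hsη : IsUnit (s η) := hη.map s
      have hssη : IsUnit (s (s η)) := hsη.map s
      obtain ⟨ε, hε, hε2, i, hi⟩ : ∃ ε : R, IsUnit ε ∧ (∀ u, IsUnit u → ∀ i : ℕ, ε * s u ≠ w ^ i * u) ∧
          ∃ i : ℕ, ε * s ε * s (s ε) = w ^ i := by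
        obtain ⟨i, h | h⟩ := F2 (η * s η * s (s η)) ((hη.mul hsη).mul hssη) (by
          simp only [map_mul, hs3]; ring)
        · exact ⟨η, hη, fun u hu i => (hη2 u hu i).1, i, h⟩
        · refine ⟨-η, hη.neg, fun u hu i h => (hη2 u hu i).2 (by linear_combination -h), i, ?_⟩
          simp only [map_neg]
          linear_combination -h
      refine ⟨ε, hε, ?_, hε2⟩
      have hi3 : i % 3 = 0 ∨ i % 3 = 1 ∨ i % 3 = 2 := by omega
      rw [pow_eq_pow_mod i hw3] at hi
      rcases hi3 with h | h | h <;> rw [h] at hi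
      · simpa using hi
      · exact absurd ⟨ε, hε, by simpa using hi⟩ hu
      · refine absurd ⟨ε ^ 2, hε.pow 2, ?_⟩ hu
        simp only [map_pow]
        linear_combination (ε * s ε * s (s ε) + w ^ 2) * hi + w * hw3
    obtain ⟨hηN, hη3⟩ := hη2
    obtain ⟨z, hz, hηz⟩ := hilbert90' s hs3 w a hw ha0 hsw hsa h3 η 1 one_ne_zero (by simpa using hηN)
    rw [one_mul] at hηz
    have hsz : (Ideal.span {z}).map s = Ideal.span {z} := by
      rw [Ideal.map_span, Set.image_singleton]
      conv_rhs => rw [← hηz]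
      exact (Ideal.span_singleton_mul_left_unit hη _).symm
    obtain ⟨d, i, j, l, hd0, hd, hform⟩ := inv _ (span_ne_bot hz) hsz
    have rel := form _ (span_ne_bot hz) d i j l hd0 hform
    rw [cls_span] at rel
    -- nontriviality
    have nontriv : ¬ ((i + 2 * j) % 3 = 0 ∧ (Q = ⊤ ∨ l % 3 = 0)) := by
      rintro ⟨hij, hl⟩
      obtain ⟨d1, -, hd1, e1⟩ := cube P1 h1 hsP1
      obtain ⟨d2, -, hd2, e2⟩ := cube P2 h2 hsP2
      obtain ⟨d3, -, hd3, e3⟩ := cube Q hQ0 hsQ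
      obtain ⟨D, hD, hQl⟩ : ∃ D, s D = D ∧ Q ^ l = Ideal.span {D} := by
        rcases hl with h | h
        · exact ⟨1, map_one s, by rw [h, Ideal.span_singleton_one, ← Ideal.one_eq_top, one_pow]⟩
        · obtain ⟨m, rfl⟩ := Nat.dvd_of_mod_eq_zero h
          exact ⟨d3 ^ m, by rw [map_pow, hd3], by rw [pow_mul, e3, Ideal.span_singleton_pow]⟩
      have hr : ∃ r i' j', i = r + 3 * i' ∧ j = r + 3 * j' :=
        ⟨i % 3, i / 3, j / 3, by omega, by omega⟩
      obtain ⟨r, i', j', rfl, rfl⟩ := hr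
      have hz' : Ideal.span {z} = Ideal.span {a ^ r * (d * d1 ^ i' * d2 ^ j' * D)} := by
        rw [hform, hQl]
        simp only [← Ideal.span_singleton_mul_span_singleton, ← Ideal.span_singleton_pow, ← e1,
          ← e2, ← hP]
        ring
      set E := d * d1 ^ i' * d2 ^ j' * D with hE
      have hsE : s E = E := by simp only [hE, map_mul, map_pow, hd, hd1, hd2, hD]
      obtain ⟨u, hu'⟩ := (Ideal.span_singleton_eq_span_singleton.1 hz').symm
      have hne : a ^ r * E ≠ 0 := by
        intro h; rw [h, zero_mul] at hu'; exact hz hu'.symm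
      apply hη3 u u.isUnit (2 * r)
      rw [← hu'] at hηz
      simp only [map_mul, map_pow, hsE, hsa] at hηz
      have hwr : (w ^ r) ^ 3 = 1 := by rw [← pow_mul, mul_comm, pow_mul, hw3, one_pow]
      apply mul_left_cancel₀ hne
      have : w ^ (2 * r) = (w ^ r) ^ 2 := by rw [← pow_mul, mul_comm]
      rw [this]
      linear_combination (w ^ r) ^ 2 * hηz - η * s u * a ^ r * E * hwr
    by_cases hQ : Q = ⊤
    · have hL1 : L = 1 := by
        have : Q = Ideal.span {1} := by simp [hQ]
        rw [hLdef, cls_congr this hQ0 (span_ne_bot one_ne_zero), cls_span]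
      have hP1 : P = 1 := by
        rw [hL1, one_pow, mul_one, pow_eq_pow_mod _ hPc] at rel
        have : (i + 2 * j) % 3 ≠ 0 := fun h => nontriv ⟨h, Or.inl hQ⟩
        have h12 : (i + 2 * j) % 3 = 1 ∨ (i + 2 * j) % 3 = 2 := by omega
        rcases h12 with h | h <;> rw [h] at rel
        · simpa using rel.symm
        · rw [pow_succ, ← rel, one_mul] at hPc; exact hPc
      have key' : ∀ c k, RelC s w c (3 * k) → c = 1 := by
        intro c k h
        obtain ⟨n, l, h⟩ := key c k h
        rw [h, hP1, hL1]; simp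
      choose f hf using fun c : {c : ClassGroup R // clMap s c = c} => exi c.1 c.2
      let g : {c : ClassGroup R // clMap s c = c} → Fin 3 := fun c =>
        ⟨f c % 3, Nat.mod_lt _ (by norm_num)⟩
      have hg : Function.Injective g := by
        intro c c' h
        have h : f c % 3 = f c' % 3 := by simpa [g] using h
        apply Subtype.ext
        have r1 := key' (c'.1 ^ 3) (f c') ((hf c').pow 3 (by norm_num))
        have r2 := key' (c.1 * c'.1 ^ 2) ((f c + 2 * f c') / 3) (by
          have := (hf c).mul ((hf c').pow 2 (by norm_num))
          convert this using 1
          omega)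
        calc c.1 = c.1 * c'.1 ^ 3 := by rw [r1, mul_one]
          _ = (c.1 * c'.1 ^ 2) * c'.1 := by rw [pow_succ _ 2, mul_assoc]
          _ = c'.1 := by rw [r2, one_mul]
      simpa using Nat.card_le_card_of_injective g hg
    · have F4' := F4.resolve_left hQ
      have all : ∀ c, clMap s c = c → ∃ n l, c = P ^ n * L ^ l := by
        intro c hc
        obtain ⟨i, hi⟩ := exi c hc
        have hi3 : i % 3 = 0 ∨ i % 3 = 1 ∨ i % 3 = 2 := by omega
        rcases hi3 with h | h | h
        · obtain ⟨k, rfl⟩ := Nat.dvd_of_mod_eq_zero h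
          exact key c k hi
        · exfalso
          obtain ⟨I, hI, x, y, -, hx, hy, -, e⟩ := hi
          rw [pow_eq_pow_mod i hw3, h, pow_one] at e
          exact F4' x y hx hy e
        · exfalso
          obtain ⟨I, hI, x, y, -, hx, hy, -, e⟩ := hi.pow 2 (by norm_num)
          rw [pow_eq_pow_mod _ hw3, show 2 * i % 3 = 1 by omega, pow_one] at e
          exact F4' x y hx hy e
      have red : ∀ (g : ClassGroup R), g ^ 3 = 1 → ∀ m, m % 3 ≠ 0 → ∀ h : ClassGroup R,
          g ^ m = h → g = h ^ m := by
        intro g hg m hm h e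
        rw [← e, ← pow_mul, pow_eq_pow_mod _ hg]
        have : m * m % 3 = 1 := by
          rw [Nat.mul_mod]
          have : m % 3 = 1 ∨ m % 3 = 2 := by omega
          rcases this with h | h <;> rw [h]
        rw [this, pow_one]
      by_cases hl : l % 3 = 0
      · have hL0 : L ^ l = 1 := by rw [pow_eq_pow_mod _ hLc, hl, pow_zero]
        have hP1 : P = 1 := by
          rw [hL0, mul_one] at rel
          have := red P hPc _ (fun h => nontriv ⟨h, Or.inr hl⟩) 1 rel.symm
          rwa [one_pow] at this
        refine card_le_three_of_pow _ L hLc ?_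
        intro c hc
        obtain ⟨n, l, h⟩ := all c hc
        exact ⟨l, by rw [h, hP1]; simp⟩
      · have hPL : L ^ l = P ^ (2 * (i + 2 * j)) := by
          have : P ^ (2 * (i + 2 * j)) * P ^ (i + 2 * j) = 1 := by
            rw [← pow_add, show 2 * (i + 2 * j) + (i + 2 * j) = 3 * (i + 2 * j) by ring, pow_mul,
              hPc, one_pow]
          calc L ^ l = (P ^ (2 * (i + 2 * j)) * P ^ (i + 2 * j)) * L ^ l := by rw [this, one_mul]
            _ = P ^ (2 * (i + 2 * j)) := by rw [mul_assoc, ← rel, mul_one]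
        have := red L hLc l hl _ hPL
        refine card_le_three_of_pow _ P hPc ?_
        intro c hc
        obtain ⟨n, l', h⟩ := all c hc
        refine ⟨n + 2 * (i + 2 * j) * (l * l'), ?_⟩
        rw [h, this, ← pow_mul, ← pow_mul, ← pow_add]
end Core2

open scoped TensorProduct nonZeroDivisors
open NumberField

section Lower
variable {K : Type*} [Field K] [NumberField K]

theorem K_minpoly {N : ℕ} (hN : N.Prime) {α : K} (hα : α ^ 3 = (N : K))
    (hKdeg : Module.finrank ℚ K = 3) :
    minpoly ℚ α = Polynomial.X ^ 3 - Polynomial.C (N : ℚ) := by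
  open Polynomial in
  have hIntg : IsIntegral ℚ α := Algebra.IsIntegral.isIntegral α
  have hd := minpoly.degree_dvd hIntg
  rw [hKdeg, Nat.dvd_prime Nat.prime_three] at hd
  have hdvd : minpoly ℚ α ∣ X ^ 3 - C (N : ℚ) := minpoly.dvd ℚ α (by simp [hα])
  rcases hd with h | h
  · exfalso
    rw [minpoly.natDegree_eq_one_iff] at h
    obtain ⟨r, rfl⟩ := h
    have hr : r ^ 3 = (N : ℚ) := by
      apply (algebraMap ℚ K).injective
      rw [map_pow, hα]; simp
    have hIntg' : IsIntegral ℤ r := by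
      refine ⟨X ^ 3 - C (N : ℤ), monic_X_pow_sub_C _ (by norm_num), ?_⟩
      simp [hr]
    obtain ⟨z, rfl⟩ := IsIntegrallyClosed.isIntegral_iff.1 hIntg'
    have hz : z ^ 3 = (N : ℤ) := by
      have : ((z ^ 3 : ℤ) : ℚ) = (N : ℤ) := by push_cast; simpa using hr
      exact_mod_cast this
    have hNp : Prime (N : ℤ) := Nat.prime_iff_prime_int.1 hN
    rw [← hz] at hNp
    exact not_prime_pow (by norm_num) hNp
  · refine (eq_of_monic_of_dvd_of_natDegree_le (minpoly.monic hIntg)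
      (monic_X_pow_sub_C (N : ℚ) (n := 3) (by norm_num)) hdvd ?_).symm
    rw [natDegree_X_pow_sub_C, h]

theorem K_adjoin {N : ℕ} (hN : N.Prime) {α : K} (hα : α ^ 3 = (N : K))
    (hKdeg : Module.finrank ℚ K = 3) : IntermediateField.adjoin ℚ {α} = ⊤ := by
  have hIntg : IsIntegral ℚ α := Algebra.IsIntegral.isIntegral α
  apply IntermediateField.eq_of_le_of_finrank_eq le_top
  rw [IntermediateField.adjoin.finrank hIntg, K_minpoly hN hα hKdeg,
    Polynomial.natDegree_X_pow_sub_C, IntermediateField.finrank_top', hKdeg]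

theorem K_trace {N : ℕ} (hN : N.Prime) {α : K} (hα : α ^ 3 = (N : K))
    (hKdeg : Module.finrank ℚ K = 3) : Algebra.trace ℚ K α = 0 := by
  rw [trace_eq_finrank_mul_minpoly_nextCoeff, K_minpoly hN hα hKdeg,
    Polynomial.nextCoeff_of_natDegree_pos (by rw [Polynomial.natDegree_X_pow_sub_C]; norm_num),
    Polynomial.natDegree_X_pow_sub_C]
  simp [Polynomial.coeff_X_pow]

theorem K_norm {N : ℕ} {a : 𝓞 K} (ha : a ^ 3 = (N : 𝓞 K))
    (hKdeg : Module.finrank ℚ K = 3) : Algebra.norm ℤ a = N := by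
  have h : (Algebra.norm ℤ a) ^ 3 = (N : ℤ) ^ 3 := by
    rw [← map_pow, ha]
    have := Algebra.norm_algebraMap (S := 𝓞 K) (N : ℤ)
    rw [RingOfIntegers.rank, hKdeg] at this
    simpa using this
  exact (Odd.strictMono_pow (by decide : Odd 3)).injective h

theorem norm_mod {N : ℕ} (hN : N.Prime) {a : 𝓞 K} (ha : a ^ 3 = (N : 𝓞 K))
    (hKdeg : Module.finrank ℚ K = 3) (β : 𝓞 K) :
    ∃ b : ℤ, ((Algebra.norm ℤ β : ℤ) : ZMod N) = (b : ZMod N) ^ 3 := by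
  have : Fact N.Prime := ⟨hN⟩
  have hcard : Nat.card (𝓞 K ⧸ Ideal.span {a}) = N := by
    have := Ideal.absNorm_span_singleton a
    rw [K_norm ha hKdeg, Ideal.absNorm_apply, Submodule.cardQuot_apply] at this
    simpa using this
  have : Finite (𝓞 K ⧸ Ideal.span {a}) := Nat.finite_of_card_ne_zero (by rw [hcard]; exact hN.ne_zero)
  let : Fintype (𝓞 K ⧸ Ideal.span {a}) := Fintype.ofFinite _
  rw [Nat.card_eq_fintype_card] at hcard
  let e := ZMod.ringEquivOfPrime _ hN hcard
  obtain ⟨b', hb'⟩ := e.surjective (Ideal.Quotient.mk _ β)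
  obtain ⟨b, rfl⟩ := ZMod.intCast_surjective b'
  rw [map_intCast, ← map_intCast (Ideal.Quotient.mk (Ideal.span {a})), eq_comm,
    Ideal.Quotient.mk_eq_mk_iff_sub_mem, Ideal.mem_span_singleton] at hb'
  obtain ⟨γ, hγ⟩ := hb'
  refine ⟨b, ?_⟩
  let B := Module.Free.chooseBasis ℤ (𝓞 K)
  let ι := Module.Free.ChooseBasisIndex ℤ (𝓞 K)
  let φ : ℤ →+* ZMod N := Int.castRingHom _
  let m : 𝓞 K →+* Matrix ι ι (ZMod N) :=
    φ.mapMatrix.comp (Algebra.leftMulMatrix B : 𝓞 K →+* Matrix ι ι ℤ)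
  have hmN : ∀ z : ℤ, m z = Matrix.scalar ι (z : ZMod N) := by
    intro z
    rw [map_intCast, map_intCast]
  have hm : ∀ x, ((Algebra.norm ℤ x : ℤ) : ZMod N) = (m x).det := by
    intro x
    rw [Algebra.norm_eq_matrix_det B]
    exact φ.map_det _
  have hnil : IsNilpotent (m (- (a * γ))) := by
    refine ⟨3, ?_⟩
    rw [← map_pow, show (-(a * γ)) ^ 3 = -(a ^ 3 * γ ^ 3) by ring, ha, map_neg, map_mul, map_natCast]
    have : ((N : ℕ) : Matrix ι ι (ZMod N)) = 0 := by
      have := map_natCast (Matrix.scalar ι : ZMod N →+* Matrix ι ι (ZMod N)) N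
      rw [← this, ZMod.natCast_self, map_zero]
    rw [this, zero_mul, neg_zero]
  have h1 := (Matrix.isNilpotent_charpoly_sub_pow_of_isNilpotent hnil).eq_zero
  have h2 := Matrix.eval_charpoly (m (-(a * γ))) (b : ZMod N)
  rw [sub_eq_zero.1 h1, ← hmN, ← map_sub] at h2
  rw [hm, show β = (b : 𝓞 K) - -(a * γ) by linear_combination hγ, ← h2]
  have : Fintype.card ι = 3 := by
    rw [← Module.finrank_eq_card_chooseBasisIndex, RingOfIntegers.rank, hKdeg]
  simp [this]

theorem exists_noncube {N : ℕ} (hN : N.Prime) (hNmod : N % 3 = 1) :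
    ∃ g : (ZMod N)ˣ, ∀ x : ZMod N, x ^ 3 ≠ g := by
  have : Fact N.Prime := ⟨hN⟩
  by_contra hcon
  push Not at hcon
  have hsurj : Function.Surjective (fun u : (ZMod N)ˣ => u ^ 3) := by
    intro g
    obtain ⟨x, hx⟩ := hcon g
    have hx0 : x ≠ 0 := by
      rintro rfl
      exact g.ne_zero (by rw [← hx]; simp)
    exact ⟨Units.mk0 x hx0, Units.ext (by simpa using hx)⟩
  have hinj := Finite.injective_iff_surjective.2 hsurj
  have : Fact (Nat.Prime 3) := ⟨Nat.prime_three⟩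
  have hc : 3 ∣ Nat.card (ZMod N)ˣ := by
    rw [Nat.card_eq_fintype_card, ZMod.card_units]
    have := hN.two_le
    omega
  obtain ⟨x, hx⟩ := exists_prime_orderOf_dvd_card' 3 hc
  have : x = 1 := hinj (by simp only; rw [one_pow, ← hx, pow_orderOf_eq_one])
  rw [this] at hx
  simp at hx

theorem exists_q {N : ℕ} (hN : N.Prime) (hNmod : N % 3 = 1) :
    ∃ q : ℕ, q.Prime ∧ q % 3 = 2 ∧ q ≠ N ∧ ∀ x : ZMod N, x ^ 3 ≠ q := by
  have : Fact N.Prime := ⟨hN⟩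
  obtain ⟨g, hg⟩ := exists_noncube hN hNmod
  have hco : Nat.Coprime 3 N := by
    rw [Nat.coprime_primes Nat.prime_three hN]; rintro rfl; omega
  have : NeZero (3 * N) := ⟨by have := hN.pos; omega⟩
  let e := ZMod.chineseRemainder hco
  have hu : IsUnit (e.symm (2, (g : ZMod N))) := by
    apply IsUnit.map
    rw [Prod.isUnit_iff]
    exact ⟨(by decide : IsUnit (2 : ZMod 3)), g.isUnit⟩
  obtain ⟨q, hq, hqp, hqe⟩ := Nat.forall_exists_prime_gt_and_eq_mod hu N
  have := congrArg e hqe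
  rw [RingEquiv.apply_symm_apply, map_natCast] at this
  have h1 : (q : ZMod 3) = 2 := congrArg Prod.fst this
  have h2 : (q : ZMod N) = g := congrArg Prod.snd this
  refine ⟨q, hqp, ?_, by omega, fun x hx => hg x (by rw [hx, h2])⟩
  have h1' : ((q : ℕ) : ZMod 3) = ((2 : ℕ) : ZMod 3) := by simpa using h1
  have := (ZMod.natCast_eq_natCast_iff' q 2 3).1 h1'
  omega

theorem lower {N : ℕ} (hN : N.Prime) (hNmod : N % 3 = 1) {α : K} (hα : α ^ 3 = (N : K))
    (hKdeg : Module.finrank ℚ K = 3) {a : 𝓞 K} (haα : (a : K) = α) :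
    3 ∣ Nat.card (ClassGroup (𝓞 K)) := by
  have : Fact N.Prime := ⟨hN⟩
  have ha : a ^ 3 = (N : 𝓞 K) := by
    apply RingOfIntegers.coe_injective
    simp [haα, hα]
  obtain ⟨q, hq, hq3, hqN, hqc⟩ := exists_q hN hNmod
  have hq0 : (q : 𝓞 K) ≠ 0 := by exact_mod_cast hq.ne_zero
  have hQn : Ideal.absNorm (Ideal.span {(q : 𝓞 K)}) = q ^ 3 := by
    rw [Ideal.absNorm_span_singleton]
    have := Algebra.norm_algebraMap (S := 𝓞 K) (q : ℤ)
    rw [RingOfIntegers.rank, hKdeg] at this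
    simp only [map_natCast] at this
    rw [this]; simp
  -- `q` is not inert
  have hnot : ¬ (Ideal.span {(q : 𝓞 K)}).IsMaximal := by
    intro hmax
    have hcard : Nat.card (𝓞 K ⧸ Ideal.span {(q : 𝓞 K)}) = q ^ 3 := by
      rw [← hQn, Ideal.absNorm_apply, Submodule.cardQuot_apply]
    have : Finite (𝓞 K ⧸ Ideal.span {(q : 𝓞 K)}) :=
      Nat.finite_of_card_ne_zero (by rw [hcard]; exact pow_ne_zero _ hq.ne_zero)
    let : Fintype (𝓞 K ⧸ Ideal.span {(q : 𝓞 K)}) := Fintype.ofFinite _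
    let : Field (𝓞 K ⧸ Ideal.span {(q : 𝓞 K)}) := Ideal.Quotient.field _
    rw [Nat.card_eq_fintype_card] at hcard
    have hpc := FiniteField.pow_card (Ideal.Quotient.mk (Ideal.span {(q : 𝓞 K)}) a)
    rw [hcard] at hpc
    have hq3' : q ^ 3 % 3 = 2 := by rw [Nat.pow_mod, hq3]
    obtain ⟨m, hm⟩ : ∃ m, q ^ 3 + (q ^ 3 - 1) = 3 * m :=
      ⟨(q ^ 3 + (q ^ 3 - 1)) / 3, by omega⟩
    have hae : Ideal.Quotient.mk (Ideal.span {(q : 𝓞 K)}) a =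
        Ideal.Quotient.mk (Ideal.span {(q : 𝓞 K)}) ((N : 𝓞 K) ^ m) := by
      rw [← ha, ← pow_mul, ← hm, map_pow, pow_add, hpc, ← pow_succ', Nat.sub_add_cancel, hpc]
      exact Nat.one_le_pow _ _ hq.pos
    rw [Ideal.Quotient.mk_eq_mk_iff_sub_mem, Ideal.mem_span_singleton] at hae
    obtain ⟨δ, hδ⟩ := hae
    have htr := congrArg (Algebra.trace ℤ (𝓞 K)) hδ
    have ht0 : Algebra.trace ℤ (𝓞 K) a = 0 := by
      have := Algebra.coe_trace_int (K := K) a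
      rw [haα, K_trace hN hα hKdeg] at this
      exact_mod_cast this
    have e1 : (N : 𝓞 K) ^ m = algebraMap ℤ (𝓞 K) ((N : ℤ) ^ m) := by simp
    have e2 : (q : 𝓞 K) * δ = (q : ℤ) • δ := by simp
    rw [map_sub, ht0, e1, e2, Algebra.trace_algebraMap, map_smul, RingOfIntegers.rank, hKdeg,
      zero_sub, smul_eq_mul, nsmul_eq_mul] at htr
    have hdvd : (q : ℤ) ∣ ((3 * N ^ m : ℕ) : ℤ) := by
      refine ⟨- Algebra.trace ℤ (𝓞 K) δ, ?_⟩
      push_cast at htr ⊢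
      linear_combination -htr
    have hdvd' := Int.natCast_dvd_natCast.1 hdvd
    rcases (Nat.Prime.dvd_mul hq).1 hdvd' with h | h
    · have := (Nat.prime_dvd_prime_iff_eq hq Nat.prime_three).1 h
      omega
    · exact hqN ((Nat.prime_dvd_prime_iff_eq hq hN).1 (hq.dvd_of_dvd_pow h))
  have hqT : Ideal.span {(q : 𝓞 K)} ≠ ⊤ := by
    intro h
    rw [h, Ideal.absNorm_top] at hQn
    exact hq.one_lt.ne' (Nat.eq_one_of_mul_eq_one_right (by rw [← pow_succ']; exact hQn.symm) )
  obtain ⟨P, hPmax, hqP⟩ := Ideal.exists_le_maximal _ hqT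
  have hP0 : P ≠ ⊥ := fun h => span_ne_bot hq0 (le_bot_iff.1 (h ▸ hqP))
  obtain ⟨f, hf, hPf⟩ : ∃ f, f % 3 ≠ 0 ∧ Ideal.absNorm P = q ^ f := by
    have hd := Ideal.absNorm_dvd_absNorm_of_le hqP
    rw [hQn, Nat.dvd_prime_pow hq] at hd
    obtain ⟨f, hf3, hf⟩ := hd
    refine ⟨f, ?_, hf⟩
    intro h
    have : f = 0 ∨ f = 3 := by omega
    rcases this with rfl | rfl
    · rw [pow_zero, Ideal.absNorm_eq_one_iff] at hf
      exact hPmax.ne_top hf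
    · obtain ⟨J, hJ⟩ := Ideal.dvd_iff_le.2 hqP
      have hn := congrArg Ideal.absNorm hJ
      rw [map_mul, hQn, hf] at hn
      have hJ1 : Ideal.absNorm J = 1 := by
        have : 0 < q ^ 3 := pow_pos hq.pos 3
        exact Nat.eq_of_mul_eq_mul_left this (by rw [mul_one]; exact hn.symm)
      rw [Ideal.absNorm_eq_one_iff] at hJ1
      rw [hJ1, Ideal.mul_top] at hJ
      exact hnot (hJ ▸ hPmax)
  by_contra h3
  set h := Nat.card (ClassGroup (𝓞 K)) with hh
  have hcls : cls (P ^ h) (pow_ne_zero _ hP0) = 1 := by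
    rw [cls_pow P hP0, hh, pow_card_eq_one']
  obtain ⟨β, hβ⟩ := cls_eq_one hcls
  have hn := congrArg Ideal.absNorm hβ
  rw [map_pow, hPf, Ideal.absNorm_span_singleton, ← pow_mul] at hn
  obtain ⟨b, hb⟩ := norm_mod hN ha hKdeg β
  obtain ⟨c, hc⟩ : ∃ c : ZMod N, c ^ 3 = (q : ZMod N) ^ (f * h) := by
    rcases Int.natAbs_eq (Algebra.norm ℤ β) with e | e
    · exact ⟨b, by rw [← hb, e, ← hn]; simp⟩
    · refine ⟨-b, ?_⟩
      rw [show (-(b : ZMod N)) ^ 3 = -((b : ZMod N) ^ 3) by ring, ← hb, e, ← hn]; simp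
  have hqN0 : (q : ZMod N) ≠ 0 := fun h => hqc 0 (by rw [h]; simp)
  have hm : (f * h) % 3 ≠ 0 := by
    intro hm
    rcases (Nat.Prime.dvd_mul Nat.prime_three).1 (Nat.dvd_of_mod_eq_zero hm) with h' | h'
    · omega
    · exact h3 h'
  generalize f * h = m at hc hm
  have hm' : m % 3 = 1 ∨ m % 3 = 2 := by omega
  rcases hm' with e | e
  · have : m = 1 + 3 * (m / 3) := by omega
    rw [this, pow_add, pow_one, mul_comm 3, pow_mul] at hc
    apply hqc (c / q ^ (m / 3))
    rw [div_pow, hc, mul_div_cancel_right₀]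
    exact pow_ne_zero _ (pow_ne_zero _ hqN0)
  · have : m = 2 + 3 * (m / 3) := by omega
    rw [this, pow_add, mul_comm 3, pow_mul] at hc
    have hne := pow_ne_zero (m / 3) hqN0
    apply hqc (c ^ 2 / (q ^ (m / 3)) ^ 2 / q)
    rw [div_pow, div_pow, ← pow_mul, mul_comm 2, pow_mul, hc]
    field_simp
end Lower

open scoped TensorProduct nonZeroDivisors Pointwise
open NumberField
set_option linter.unusedSectionVars false

section Gal3
variable {k L : Type*} [Field k] [Field L] [NumberField k] [NumberField L] [Algebra k L]
  [IsGalois k L]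

theorem gal_prime (σ : Gal(L/k)) (hσ : ∀ g : Gal(L/k), g = 1 ∨ g = σ ∨ g = σ * σ)
    (hσ3 : σ * σ * σ = 1)
    (hcard : Nat.card Gal(L/k) = 3) [IsPrincipalIdealRing (𝓞 k)] (P : Ideal (𝓞 L)) [hP : P.IsPrime]
    (hP0 : P ≠ ⊥) :
    ∃ d : 𝓞 k, d ≠ 0 ∧ (σ • P ≠ P → P * σ • P * σ • σ • P = Ideal.span {algebraMap (𝓞 k) (𝓞 L) d}) ∧
    (σ • P = P → P ^ Nat.card (P.inertia Gal(L/k)) = Ideal.span {algebraMap (𝓞 k) (𝓞 L) d}) := by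
  classical
  let p : Ideal (𝓞 k) := P.under (𝓞 k)
  have hp0 : p ≠ ⊥ := Ideal.IsIntegral.comap_ne_bot _ hP0
  have hpp : p.IsPrime := inferInstance
  have hpm : p.IsMaximal := hpp.isMaximal hp0
  have hlies : P.LiesOver p := inferInstance
  have hmap := Ideal.map_algebraMap_eq_finsetProd_pow (R := 𝓞 L) (p := p) hp0
  have hfin : Finite (𝓞 k ⧸ p) := Ideal.finiteQuotientOfFreeOfNeBot p hp0
  have : Finite p.ResidueField :=
    Finite.of_surjective _ (Ideal.bijective_algebraMap_quotient_residueField p).2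
  have hin := Ideal.card_inertia_eq_ramificationIdxIn (G := Gal(L/k)) p P
  have he : ∀ P' ∈ (p.primesOver (𝓞 L)).toFinset, P' ^ P'.ramificationIdx (𝓞 k) =
      P' ^ Nat.card (P.inertia Gal(L/k)) := by
    intro P' hP'
    rw [Set.mem_toFinset] at hP'
    obtain ⟨h1, h2⟩ := hP'
    rw [hin, Ideal.ramificationIdxIn_eq_ramificationIdx p P' Gal(L/k)]
  rw [Finset.prod_congr rfl he, Finset.prod_pow] at hmap
  have hid := Ideal.ncard_primesOver_mul_ramificationIdxIn_mul_inertiaDegIn p (𝓞 L) Gal(L/k)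
  rw [← hin, hcard] at hid
  have horb := Algebra.IsInvariant.orbit_eq_primesOver (𝓞 k) (𝓞 L) Gal(L/k) p P
  have hmem : ∀ P' : Ideal (𝓞 L), P' ∈ p.primesOver (𝓞 L) ↔ P' = P ∨ P' = σ • P ∨ P' = σ • σ • P := by
    intro P'
    rw [← horb, MulAction.mem_orbit_iff]
    constructor
    · rintro ⟨g, rfl⟩
      rcases hσ g with rfl | rfl | rfl
      · simp
      · simp
      · simp [mul_smul]
    · rintro (rfl | rfl | rfl)
      · exact ⟨1, one_smul _ _⟩
      · exact ⟨σ, rfl⟩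
      · exact ⟨σ * σ, mul_smul _ _ _⟩
  obtain ⟨d, hd⟩ := (IsPrincipalIdealRing.principal p).principal
  have hd' : p = Ideal.span {d} := hd
  have hd0 : d ≠ 0 := by rintro rfl; exact hp0 (by rw [hd']; simp)
  refine ⟨d, hd0, ?_, ?_⟩
  · intro hne
    have hinv3 : σ • σ • σ • P = P := by rw [← mul_smul, ← mul_smul, hσ3, one_smul]
    have hne2 : σ • σ • P ≠ P := fun h => hne (by rw [h] at hinv3; exact hinv3)
    have hne12 : σ • P ≠ σ • σ • P := fun h => hne (MulAction.injective σ h).symm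
    have hF : (p.primesOver (𝓞 L)).toFinset = {P, σ • P, σ • σ • P} := by
      ext P'
      rw [Set.mem_toFinset, hmem]; simp
    have hn : (p.primesOver (𝓞 L)).ncard = 3 := by
      rw [Set.ncard_eq_toFinset_card', hF]
      exact Finset.card_eq_three.2 ⟨_, _, _, hne.symm, hne2.symm, hne12, rfl⟩
    have he1 : Nat.card (P.inertia Gal(L/k)) = 1 := by
      rw [hn] at hid
      exact Nat.eq_one_of_mul_eq_one_right (Nat.eq_of_mul_eq_mul_left (by norm_num : 0 < 3) hid)
    rw [he1, pow_one, hF, Finset.prod_insert, Finset.prod_insert, Finset.prod_singleton, hd',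
      Ideal.map_span, Set.image_singleton] at hmap
    · rw [hmap, mul_assoc]
    · simpa using hne12
    · simp [hne.symm, hne2.symm]
  · intro heq
    have hF : (p.primesOver (𝓞 L)).toFinset = {P} := by
      ext P'
      rw [Set.mem_toFinset, hmem]; simp [heq]
    rw [hF, Finset.prod_singleton, hd', Ideal.map_span, Set.image_singleton] at hmap
    exact hmap.symm

/-- ring automorphism of the ring of integers. -/
noncomputable def sEq (σ : Gal(L/k)) : 𝓞 L ≃+* 𝓞 L := MulSemiringAction.toRingEquiv Gal(L/k) (𝓞 L) σ

theorem sEq_coe (σ : Gal(L/k)) (x : 𝓞 L) : ((sEq σ x : 𝓞 L) : L) = σ (x : L) := rfl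

theorem map_sEq (σ : Gal(L/k)) (I : Ideal (𝓞 L)) : I.map (sEq σ) = σ • I := rfl

theorem sEq_alg (σ : Gal(L/k)) (d : 𝓞 k) :
    sEq σ (algebraMap (𝓞 k) (𝓞 L) d) = algebraMap (𝓞 k) (𝓞 L) d := by
  apply RingOfIntegers.coe_injective
  exact σ.commutes d

theorem inertia_card (hcard : Nat.card Gal(L/k) = 3) (P : Ideal (𝓞 L)) :
    Nat.card (P.inertia Gal(L/k)) = 1 ∨ Nat.card (P.inertia Gal(L/k)) = 3 := by
  have := Subgroup.card_subgroup_dvd_card (P.inertia Gal(L/k))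
  rwa [hcard, Nat.dvd_prime Nat.prime_three] at this

theorem gal_F0 (σ : Gal(L/k)) (hσ : ∀ g : Gal(L/k), g = 1 ∨ g = σ ∨ g = σ * σ)
    (hσ3 : σ * σ * σ = 1)
    (hcard : Nat.card Gal(L/k) = 3) [IsPrincipalIdealRing (𝓞 k)] (I : Ideal (𝓞 L)) (hI : I ≠ ⊥) :
    ∃ d : 𝓞 L, d ≠ 0 ∧ sEq σ d = d ∧
      I * I.map (sEq σ) * (I.map (sEq σ)).map (sEq σ) = Ideal.span {d} := by
  suffices h : ∃ d : 𝓞 k, d ≠ 0 ∧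
      I * I.map (sEq σ) * (I.map (sEq σ)).map (sEq σ) =
        Ideal.span {algebraMap (𝓞 k) (𝓞 L) d} by
    obtain ⟨d, hd0, hd⟩ := h
    refine ⟨algebraMap (𝓞 k) (𝓞 L) d, ?_, sEq_alg σ d, hd⟩
    simpa using hd0
  induction I using UniqueFactorizationMonoid.induction_on_prime with
  | h₁ => exact absurd rfl hI
  | h₂ I hu =>
    rw [Ideal.isUnit_iff] at hu
    exact ⟨1, one_ne_zero, by simp [hu, Ideal.map_top]⟩
  | h₃ I P hI0 hPp ih =>
    obtain ⟨d, hd0, hd⟩ := ih hI0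
    have hP : P.IsPrime := Ideal.isPrime_of_prime hPp
    obtain ⟨e, he0, he1, he2⟩ := gal_prime σ hσ hσ3 hcard P hPp.ne_zero
    obtain ⟨f, hf0, hf⟩ : ∃ f : 𝓞 k, f ≠ 0 ∧
        P * P.map (sEq σ) * (P.map (sEq σ)).map (sEq σ) =
        Ideal.span {algebraMap (𝓞 k) (𝓞 L) f} := by
      simp only [map_sEq]
      by_cases h : σ • P = P
      · have he := he2 h
        simp only [h]
        rcases inertia_card hcard P with h1 | h1 <;> rw [h1] at he
        · refine ⟨e ^ 3, pow_ne_zero _ he0, ?_⟩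
          rw [map_pow, ← Ideal.span_singleton_pow, ← he]; ring
        · exact ⟨e, he0, by rw [← he]; ring⟩
      · exact ⟨e, he0, he1 h⟩
    refine ⟨f * d, mul_ne_zero hf0 hd0, ?_⟩
    rw [map_mul, ← Ideal.span_singleton_mul_span_singleton, ← hf, ← hd]
    simp only [Ideal.map_mul]
    ring

/-- an invariant prime with trivial inertia is principal with a fixed generator -/
theorem gal_unram (σ : Gal(L/k)) (hσ : ∀ g : Gal(L/k), g = 1 ∨ g = σ ∨ g = σ * σ)
    (hσ3 : σ * σ * σ = 1)
    (hcard : Nat.card Gal(L/k) = 3) [IsPrincipalIdealRing (𝓞 k)] (P : Ideal (𝓞 L)) [hP : P.IsPrime]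
    (hP0 : P ≠ ⊥) (hs : P.map (sEq σ) = P) (y : 𝓞 L) (hy : sEq σ y - y ∉ P) :
    ∃ d, sEq σ d = d ∧ P = Ideal.span {d} := by
  obtain ⟨e, he0, -, he2⟩ := gal_prime σ hσ hσ3 hcard P hP0
  have he := he2 hs
  have h1 : Nat.card (P.inertia Gal(L/k)) = 1 := by
    rcases inertia_card hcard P with h1 | h1
    · exact h1
    · exfalso
      rw [← hcard, Subgroup.card_eq_iff_eq_top] at h1
      have : σ ∈ P.inertia Gal(L/k) := by rw [h1]; trivial
      exact hy (AddSubgroup.mem_inertia.1 this y)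
  rw [h1, pow_one] at he
  exact ⟨_, sEq_alg σ e, he⟩

/-- two invariant primes lying over the same prime coincide -/
theorem gal_unique (σ : Gal(L/k)) (hσ : ∀ g : Gal(L/k), g = 1 ∨ g = σ ∨ g = σ * σ)
    (P P' : Ideal (𝓞 L)) [hP : P.IsPrime] [hP' : P'.IsPrime]
    (hs : P.map (sEq σ) = P) (l : 𝓞 k) (hl : Prime l) [IsPrincipalIdealRing (𝓞 k)]
    (h : algebraMap (𝓞 k) (𝓞 L) l ∈ P) (h' : algebraMap (𝓞 k) (𝓞 L) l ∈ P') : P = P' := by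
  have hpm : (Ideal.span {l}).IsMaximal :=
    PrincipalIdealRing.isMaximal_of_irreducible hl.irreducible
  have hover : ∀ J : Ideal (𝓞 L), J.IsPrime → algebraMap (𝓞 k) (𝓞 L) l ∈ J →
      J.LiesOver (Ideal.span {l}) := by
    intro J hJ hlJ
    refine ⟨?_⟩
    have : J.under (𝓞 k) ≠ ⊤ := Ideal.IsPrime.ne_top inferInstance
    refine hpm.eq_of_le this ?_
    rw [Ideal.span_singleton_le_iff_mem]
    exact hlJ
  have := hover P hP h
  have := hover P' hP' h'
  obtain ⟨g, hg⟩ := Ideal.exists_smul_eq_of_isGaloisGroup (Ideal.span {l}) P P' Gal(L/k)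
  rw [map_sEq] at hs
  rw [← hg]
  rcases hσ g with rfl | rfl | rfl
  · simp
  · exact hs.symm
  · rw [mul_smul, hs, hs]
end Gal3

open scoped TensorProduct nonZeroDivisors Pointwise
open NumberField
set_option linter.unusedSectionVars false

section F3
variable {L : Type*} [Field L] [NumberField L]

theorem urank_pos (h6 : Module.finrank ℚ L = 6) : 0 < Units.rank L := by
  have h1 := InfinitePlace.card_add_two_mul_card_eq_rank L
  have h2 := InfinitePlace.card_eq_nrRealPlaces_add_nrComplexPlaces L
  rw [Units.rank]
  omega

theorem exists_noncube_unit (h6 : Module.finrank ℚ L = 6) :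
    ∃ η : (𝓞 L)ˣ, ∀ u z : (𝓞 L)ˣ, z ^ 6 = 1 → η ≠ z * u ^ 3 := by
  have hr := urank_pos h6
  let i : Fin (Units.rank L) := ⟨0, hr⟩
  refine ⟨Units.fundSystem L i, ?_⟩
  intro u z hz h
  have hz' : z ∈ Units.torsion L := by
    rw [Units.torsion, CommGroup.mem_torsion]
    exact isOfFinOrder_iff_pow_eq_one.2 ⟨6, by norm_num, hz⟩
  obtain ⟨⟨ζ, e⟩, he, -⟩ := Units.exist_unique_eq_mul_prod L u
  have hu := (Units.exist_unique_eq_mul_prod L (Units.fundSystem L i)).unique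
    (y₁ := (1, Pi.single i 1)) (y₂ := (⟨z, hz'⟩ * ζ ^ 3, fun j => e j * 3)) ?_ ?_
  · have := congrFun (congrArg Prod.snd hu) i
    simp at this
    omega
  · simp only [OneMemClass.coe_one, one_mul]
    rw [Finset.prod_eq_single i]
    · simp
    · intro j _ hj; simp [hj]
    · simp
  · simp only at he ⊢
    rw [h]
    conv_lhs => rw [he]
    push_cast
    rw [mul_pow, ← Finset.prod_pow, mul_assoc]
    congr 2
    refine Finset.prod_congr rfl fun j _ => ?_
    rw [zpow_mul]; rfl

theorem gal_F3 (h6 : Module.finrank ℚ L = 6) (s : 𝓞 L ≃+* 𝓞 L) (hs3 : ∀ x, s (s (s x)) = x)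
    (w : 𝓞 L) (hw : w ^ 3 = 1) (hsw : s w = w)
    (F2 : ∀ u, IsUnit u → s u = u → ∃ i : ℕ, u = w^i ∨ u = -w^i) :
    ∃ η, IsUnit η ∧ ∀ u, IsUnit u → ∀ i : ℕ, η * s u ≠ w^i*u ∧ η * s u ≠ -(w^i*u) := by
  by_contra! hcon
  obtain ⟨η, hη⟩ := exists_noncube_unit h6
  have key : ∀ e : 𝓞 L, IsUnit e → ∃ u z : 𝓞 L, IsUnit u ∧ z ^ 6 = 1 ∧ s z = z ∧ e * s u = z * u := by
    intro e he
    obtain ⟨u, hu, i, hi⟩ := hcon e he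
    have hw6 : (w ^ i) ^ 6 = 1 := by rw [← pow_mul, mul_comm, pow_mul, show w ^ 6 = (w^3)^2 by ring, hw]; simp
    by_cases h : e * s u = w ^ i * u
    · exact ⟨u, w ^ i, hu, hw6, by rw [map_pow, hsw], h⟩
    · refine ⟨u, -w ^ i, hu, by rw [Even.neg_pow (by decide), hw6], by rw [map_neg, map_pow, hsw], ?_⟩
      rw [hi h]; ring
  obtain ⟨u, z, hu, hz, hsz, h1⟩ := key η η.isUnit
  obtain ⟨v, z', hv, hz', hsz', h2⟩ := key u hu
  have hN : ∃ z'' : 𝓞 L, z'' ^ 6 = 1 ∧ v * s v * s (s v) = z'' := by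
    refine ⟨_, ?_, rfl⟩
    obtain ⟨i, hi⟩ := F2 (v * s v * s (s v)) ((hv.mul (hv.map s)).mul ((hv.map s).map s))
      (by rw [map_mul, map_mul, hs3]; ring)
    have hw6 : (w ^ i) ^ 6 = 1 := by rw [← pow_mul, mul_comm, pow_mul, show w ^ 6 = (w^3)^2 by ring, hw]; simp
    rcases hi with hi | hi <;> rw [hi]
    · exact hw6
    · rw [Even.neg_pow (by decide), hw6]
  obtain ⟨z'', hz'', h3⟩ := hN
  have h2' := congrArg s h2
  rw [map_mul, map_mul, hsz'] at h2'
  have hz0 : z' ≠ 0 := by rintro rfl; simp at hz'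
  have hv0 : v ≠ 0 := hv.ne_zero
  have hsv0 : s v ≠ 0 := (hv.map s).ne_zero
  have hssv0 : s (s v) ≠ 0 := ((hv.map s).map s).ne_zero
  have h4 : (η : 𝓞 L) * (s v) ^ 3 = z * z'' := by
    apply mul_left_cancel₀ hz0
    have e1 : (η : 𝓞 L) * s u * (s v * s (s v)) = z * u * (s v * s (s v)) := by rw [h1]
    have e2 : (η : 𝓞 L) * (z' * s v) * s v = z * (z' * v) * s (s v) := by
      rw [← h2', ← h2]; linear_combination e1
    rw [← h3]
    linear_combination (s v) * e2
  obtain ⟨V, hV⟩ := hv.map s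
  have hzz : (z * z'') ^ 6 = 1 := by rw [mul_pow, hz, hz'', one_mul]
  obtain ⟨Z, hZ⟩ : IsUnit (z * z'') := IsUnit.of_pow_eq_one hzz (by norm_num)
  refine hη V⁻¹ Z ?_ ?_
  · ext1; push_cast; rw [hZ, hzz]
  · rw [inv_pow, eq_mul_inv_iff_mul_eq]
    ext1; push_cast; rw [hV, hZ, h4]
end F3

open scoped TensorProduct nonZeroDivisors Pointwise
open NumberField
set_option linter.unusedSectionVars false
set_option linter.unusedVariables false

section F2
variable {R : Type*} [CommRing R]

/-- The prime above `N`. -/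
def PP (a w : R) (c : ℤ) : Ideal R := Ideal.span {a, (c : R) - w}

theorem PP_mul {N : ℕ} (hN3 : ¬ 3 ∣ N) {a w : R} (ha : a ^ 3 = N) (hw : w ^ 2 + w + 1 = 0) (c : ℤ)
    (hc : (N : ℤ) ∣ c ^ 2 + c + 1) : PP a w c * PP a (w ^ 2) c = Ideal.span {a} := by
  obtain ⟨m, hm⟩ := hc
  have hm' : (c : R) ^ 2 + c + 1 = a ^ 3 * m := by
    rw [ha]; exact_mod_cast congrArg (Int.cast : ℤ → R) hm
  have hcw : ((c : R) - w) * (c - w ^ 2) = a ^ 3 * m := by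
    rw [← hm']; linear_combination (-(c : R) + w - 1) * hw
  apply le_antisymm
  · rw [PP, PP, Ideal.span_mul_span']
    rw [Ideal.span_le]
    rintro x ⟨y, hy, z, hz, rfl⟩
    simp only [Set.mem_insert_iff, Set.mem_singleton_iff] at hy hz
    rw [SetLike.mem_coe, Ideal.mem_span_singleton]
    rcases hy with rfl | rfl
    · exact ⟨z, rfl⟩
    · rcases hz with rfl | rfl
      · exact ⟨_, mul_comm _ _⟩
      · exact ⟨a ^ 2 * m, by change ((c : R) - w) * (c - w ^ 2) = _; rw [hcw]; ring⟩
  · rw [Ideal.span_singleton_le_iff_mem]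
    have h1 : a ∈ PP a w c := Ideal.subset_span (by simp)
    have h2 : (c : R) - w ∈ PP a w c := Ideal.subset_span (by simp)
    have h3 : a ∈ PP a (w ^ 2) c := Ideal.subset_span (by simp)
    have h4 : (c : R) - w ^ 2 ∈ PP a (w ^ 2) c := Ideal.subset_span (by simp)
    set J := PP a w c * PP a (w ^ 2) c
    have e1 : a * (c - w ^ 2) ∈ J := Ideal.mul_mem_mul h1 h4
    have e2 : (c - w) * a ∈ J := Ideal.mul_mem_mul h2 h3
    have e3 : a * a ∈ J := Ideal.mul_mem_mul h1 h3
    have hcop : IsCoprime (3 : ℤ) N := by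
      rw [Int.isCoprime_iff_gcd_eq_one]
      exact (Nat.Prime.coprime_iff_not_dvd Nat.prime_three).2 hN3
    obtain ⟨u, v, huv⟩ := hcop
    have huv' : (u : R) * 3 + v * a ^ 3 = 1 := by
      rw [ha]; exact_mod_cast congrArg (Int.cast : ℤ → R) huv
    have : a = (u * (w ^ 2 - w)) * (a * (c - w ^ 2)) - (u * (w ^ 2 - w)) * ((c - w) * a)
        + (v * a ^ 2) * (a * a) := by
      linear_combination (-a) * huv' + (a * u) * (3 - 3 * w + w ^ 2) * hw
    rw [this]
    exact Ideal.add_mem _ (Ideal.sub_mem _ (Ideal.mul_mem_left _ _ e1) (Ideal.mul_mem_left _ _ e2))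
      (Ideal.mul_mem_left _ _ e3)

theorem PP_map (s : R ≃+* R) (a w : R) (c : ℤ) : (PP a w c).map s = PP (s a) (s w) c := by
  rw [PP, Ideal.map_span, Set.image_pair, PP, map_sub, map_intCast]

theorem PP_unit (a w c) (v u : R) (huv : u * v = 1) : PP (v * a) w c = PP a w c := by
  apply le_antisymm
  · rw [PP, Ideal.span_le]
    rintro x (rfl | rfl)
    · exact Ideal.mul_mem_left _ _ (Ideal.subset_span (by simp))
    · exact Ideal.subset_span (by simp)
  · rw [PP, Ideal.span_le]
    rintro x (rfl | rfl)
    · have : x = u * (v * x) := by rw [← mul_assoc, huv, one_mul]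
      have h2 : v * x ∈ PP (v * x) w c := Ideal.subset_span (by simp)
      rw [SetLike.mem_coe]
      have h3 := Ideal.mul_mem_left _ u h2
      rwa [← this] at h3
    · exact Ideal.subset_span (by simp)

theorem exists_c {N : ℕ} (hN : N.Prime) (hN1 : N % 3 = 1) : ∃ c : ℤ, (N : ℤ) ∣ c ^ 2 + c + 1 := by
  have := Fact.mk hN
  have h3 : 3 ∣ Fintype.card (ZMod N)ˣ := by
    rw [ZMod.card_units_eq_totient, Nat.totient_prime hN]
    have := hN.pos
    omega
  have := Fact.mk Nat.prime_three
  obtain ⟨x, hx⟩ := exists_prime_orderOf_dvd_card 3 h3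
  have hx1 : (x : ZMod N) ≠ 1 := by
    intro h
    rw [Units.val_eq_one] at h
    rw [h] at hx; simp at hx
  have hx3 : (x : ZMod N) ^ 3 = 1 := by
    rw [← Units.val_pow_eq_pow_val, ← hx, pow_orderOf_eq_one]; rfl
  have h0 : (x : ZMod N) ^ 2 + x + 1 = 0 := by
    have : ((x : ZMod N) - 1) * ((x : ZMod N) ^ 2 + x + 1) = 0 := by linear_combination hx3
    rcases mul_eq_zero.1 this with h | h
    · exact absurd (sub_eq_zero.1 h) hx1
    · exact h
  refine ⟨((x : ZMod N).val : ℤ), ?_⟩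
  rw [← ZMod.intCast_zmod_eq_zero_iff_dvd _ N] <;> try exact hN.ne_zero
  push_cast
  rw [ZMod.natCast_zmod_val, h0]

end F2

section F2b
variable {L : Type*} [Field L] [NumberField L]

theorem PP_norm (h6 : Module.finrank ℚ L = 6) {N : ℕ} (hN : N.Prime) (hN3 : ¬ 3 ∣ N) {a w : 𝓞 L}
    (ha : a ^ 3 = N) (hw : w ^ 2 + w + 1 = 0) (c : ℤ) (hc : (N : ℤ) ∣ c ^ 2 + c + 1)
    (t : 𝓞 L ≃+* 𝓞 L) (hta : t a = a) (htw : t w = w ^ 2) :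
    Ideal.absNorm (PP a w c) = N ∧ Ideal.absNorm (PP a (w ^ 2) c) = N := by
  have h1 := congrArg Ideal.absNorm (PP_mul hN3 ha hw c hc)
  rw [map_mul] at h1
  have h2 : Ideal.absNorm (Ideal.span {a}) ^ 3 = (N ^ 2) ^ 3 := by
    rw [← map_pow, Ideal.span_singleton_pow, ha, Ideal.absNorm_span_singleton,
      show ((N : ℕ) : 𝓞 L) = algebraMap ℤ (𝓞 L) (N : ℤ) by simp, Algebra.norm_algebraMap,
      RingOfIntegers.rank, h6, Int.natAbs_pow, Int.natAbs_natCast]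
    ring
  have h3 := Nat.pow_left_injective (by norm_num : 3 ≠ 0) h2
  have h4 : Ideal.absNorm (PP a w c) = Ideal.absNorm (PP a (w ^ 2) c) := by
    rw [Ideal.absNorm_apply, Ideal.absNorm_apply, Submodule.cardQuot_apply, Submodule.cardQuot_apply]
    refine Nat.card_congr (Ideal.quotientEquiv _ _ t ?_).toEquiv
    have := PP_map t a w c
    rw [hta, htw] at this
    exact this.symm
  rw [← h4, h3, ← sq] at h1
  have h5 := Nat.pow_left_injective (by norm_num : 2 ≠ 0) h1
  exact ⟨h5, h4 ▸ h5⟩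

theorem PP_prime {N : ℕ} (hN : N.Prime) (P : Ideal (𝓞 L)) (h : Ideal.absNorm P = N) : P.IsPrime :=
  Ideal.isPrime_of_irreducible_absNorm (h ▸ hN)

theorem residue_int {N : ℕ} (hN : N.Prime) (P : Ideal (𝓞 L)) (h : Ideal.absNorm P = N) (x : 𝓞 L) :
    ∃ m : ℤ, x - m ∈ P := by
  have hc : Nat.card (𝓞 L ⧸ P) = N := by
    rw [← h, Ideal.absNorm_apply, Submodule.cardQuot_apply]
  have : Finite (𝓞 L ⧸ P) := Nat.finite_of_card_ne_zero (by rw [hc]; exact hN.ne_zero)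
  have := Fintype.ofFinite (𝓞 L ⧸ P)
  rw [Nat.card_eq_fintype_card] at hc
  let e := ZMod.ringEquivOfPrime _ hN hc
  have : NeZero N := ⟨hN.ne_zero⟩
  refine ⟨((e.symm (Ideal.Quotient.mk P x)).val : ℤ), ?_⟩
  rw [← Ideal.Quotient.eq]
  apply e.symm.injective
  rw [map_intCast, map_intCast, Int.cast_natCast, ZMod.natCast_zmod_val]

theorem mem_PP_int {N : ℕ} (hN : N.Prime) (P : Ideal (𝓞 L)) (h : Ideal.absNorm P = N) (m : ℤ)
    (hm : (m : 𝓞 L) ∈ P) : (N : ℤ) ∣ m := by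
  have hP := PP_prime hN P h
  by_contra hnd
  have hcop : IsCoprime (N : ℤ) m := (Nat.prime_iff_prime_int.1 hN).coprime_iff_not_dvd.2 hnd
  obtain ⟨u, v, huv⟩ := hcop
  apply hP.ne_top
  rw [Ideal.eq_top_iff_one]
  have h1 : ((N : ℕ) : 𝓞 L) ∈ P := h ▸ Ideal.absNorm_mem P
  have : (1 : 𝓞 L) = u * (N : ℕ) + v * m := by
    exact_mod_cast (congrArg (Int.cast : ℤ → 𝓞 L) huv).symm
  rw [this]
  exact Ideal.add_mem _ (Ideal.mul_mem_left _ _ h1) (Ideal.mul_mem_left _ _ hm)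

theorem gal_F4 {N : ℕ} (hN : N.Prime) (hN9 : ¬ 9 ∣ N - 1) (hN3 : N % 3 = 1) {a w : 𝓞 L}
    (ha0 : a ≠ 0)
    (ha : a ^ 3 = N) (hw : w ^ 2 + w + 1 = 0) (c : ℤ) (hc : (N : ℤ) ∣ c ^ 2 + c + 1)
    (s : 𝓞 L ≃+* 𝓞 L) (hsa : s a = w * a) (hsw : s w = w)
    (h1 : Ideal.absNorm (PP a w c) = N) (h2 : Ideal.absNorm (PP a (w ^ 2) c) = N)
    (x y : 𝓞 L) (hx : x ≠ 0) (hy : y ≠ 0) :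
    x * s x * s (s x) ≠ w * (y * s y * s (s y)) := by
  have hP1 := PP_prime hN _ h1
  have hP2 := PP_prime hN _ h2
  have hw3 : w ^ 3 = 1 := by linear_combination (w - 1) * hw
  have hsP : ∀ z, z ∈ PP a w c → s z ∈ PP a w c := by
    intro z hz
    have := Ideal.mem_map_of_mem s hz
    rwa [PP_map, hsa, hsw, PP_unit a w c w (w ^ 2) (by rw [← hw3]; ring)] at this
  have hsP' : ∀ z, s z ∈ PP a w c → z ∈ PP a w c := by
    intro z hz
    have h := PP_map s a w c
    rw [hsa, hsw, PP_unit a w c w (w ^ 2) (by rw [← hw3]; ring)] at h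
    rw [← h] at hz
    obtain ⟨z', hz', e⟩ := (Ideal.mem_map_iff_of_surjective s s.surjective).1 hz
    rwa [← s.injective e]
  have hmul := PP_mul (by omega) ha hw c hc
  have hnorm : ∀ z, z * s z * s (s z) ∈ PP a w c → z ∈ PP a w c := by
    intro z hz
    rcases hP1.mem_or_mem hz with h | h
    · rcases hP1.mem_or_mem h with h | h
      · exact h
      · exact hsP' _ h
    · exact hsP' _ (hsP' _ h)
  have hwP : w ∉ PP a w c := by
    intro h
    apply hP1.ne_top
    rw [Ideal.eq_top_iff_one, ← hw3]
    exact Ideal.pow_mem_of_mem _ h 3 (by norm_num)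
  -- element of P2 not in P1
  obtain ⟨e, he2, he1⟩ : ∃ e, e ∈ PP a (w ^ 2) c ∧ e ∉ PP a w c := by
    by_contra! hcon
    apply hP1.ne_top
    have q1 : (c : 𝓞 L) - w ∈ PP a w c := Ideal.subset_span (by simp)
    have q2 : (c : 𝓞 L) - w ^ 2 ∈ PP a w c := hcon _ (Ideal.subset_span (by simp))
    have q3 : (3 : 𝓞 L) ∈ PP a w c := by
      have : (3 : 𝓞 L) = (w ^ 2 - w) * ((c : 𝓞 L) - w ^ 2) - (w ^ 2 - w) * ((c : 𝓞 L) - w) := by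
        linear_combination (3 - 3 * w + w ^ 2) * hw
      rw [this]
      exact Ideal.sub_mem _ (Ideal.mul_mem_left _ _ q2) (Ideal.mul_mem_left _ _ q1)
    have := mem_PP_int hN _ h1 3 (by exact_mod_cast q3)
    have h3 : N ∣ 3 := by exact_mod_cast this
    rw [Nat.prime_dvd_prime_iff_eq hN Nat.prime_three] at h3
    omega
  have ha1 : a ∈ PP a w c := Ideal.subset_span (by simp)
  have main : ∀ n : ℕ, ∀ x y : 𝓞 L, x ≠ 0 → y ≠ 0 → x ∉ PP a w c ^ n →
      x * s x * s (s x) ≠ w * (y * s y * s (s y)) := by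
    intro n
    induction n with
    | zero => intro x y _ _ h; simp at h
    | succ n ih =>
      intro x y hx hy hxn heq
      by_cases hxP : x ∈ PP a w c
      · have hyP : y ∈ PP a w c := by
          apply hnorm
          have : w * (y * s y * s (s y)) ∈ PP a w c := by
            rw [← heq, mul_assoc]; exact Ideal.mul_mem_right _ _ hxP
          exact (hP1.mem_or_mem this).resolve_left hwP
        have hx' : x * e ∈ Ideal.span {a} := hmul ▸ Ideal.mul_mem_mul hxP he2
        have hy' : y * e ∈ Ideal.span {a} := hmul ▸ Ideal.mul_mem_mul hyP he2
        rw [Ideal.mem_span_singleton] at hx' hy'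
        obtain ⟨x', hx'⟩ := hx'
        obtain ⟨y', hy'⟩ := hy'
        have he0 : e ≠ 0 := by rintro rfl; simp at he1
        refine ih x' y' ?_ ?_ ?_ ?_
        · rintro rfl; simp [hx, he0] at hx'
        · rintro rfl; simp [hy, he0] at hy'
        · intro hx'n
          apply hxn
          have : e * x ∈ PP a w c ^ (n + 1) := by
            rw [mul_comm, hx', pow_succ, mul_comm a]
            exact Ideal.mul_mem_mul hx'n ha1
          exact (Ideal.IsPrime.mul_mem_pow _ this).resolve_left he1
        · have ex1 := congrArg s hx'
          have ex2 := congrArg s ex1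
          have ey1 := congrArg s hy'
          have ey2 := congrArg s ey1
          simp only [map_mul, hsa, hsw] at ex1 ex2 ey1 ey2
          have ha3 : a * (w * a) * (w * (w * a)) ≠ 0 := by
            have hw0 : w ≠ 0 := by rintro rfl; simp at hw
            simp [ha0, hw0]
          apply mul_left_cancel₀ ha3
          calc _ = (a * x') * (w * a * s x') * (w * (w * a) * s (s x')) := by ring
            _ = (x * s x * s (s x)) * (e * s e * s (s e)) := by rw [← hx', ← ex1, ← ex2]; ring
            _ = w * ((y * e) * (s y * s e) * (s (s y) * s (s e))) := by rw [heq]; ring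
            _ = _ := by rw [hy', ey1, ey2]; ring
      · have hyP : y ∉ PP a w c := by
          intro hyP
          apply hxP
          apply hnorm
          rw [heq]
          exact Ideal.mul_mem_left _ _ (by rw [mul_assoc]; exact Ideal.mul_mem_right _ _ hyP)
        obtain ⟨m, hm⟩ := residue_int hN _ h1 x
        obtain ⟨n', hn⟩ := residue_int hN _ h1 y
        have cubes : ∀ (z : 𝓞 L) (k : ℤ), z - k ∈ PP a w c →
            z * s z * s (s z) - (k : 𝓞 L) ^ 3 ∈ PP a w c := by
          intro z k hz
          have z1 := hsP _ hz
          have z2 := hsP _ z1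
          simp only [map_sub, map_intCast] at z1 z2
          have : z * s z * s (s z) - (k : 𝓞 L) ^ 3 = (z - k) * (s z * s (s z)) +
            (k * s (s z)) * (s z - k) + k ^ 2 * (s (s z) - k) := by ring
          rw [this]
          exact Ideal.add_mem _ (Ideal.add_mem _ (Ideal.mul_mem_right _ _ hz)
            (Ideal.mul_mem_left _ _ z1)) (Ideal.mul_mem_left _ _ z2)
        have c1 := cubes x m hm
        have c2 := cubes y n' hn
        have q1 : (c : 𝓞 L) - w ∈ PP a w c := Ideal.subset_span (by simp)
        have c3 : ((m ^ 3 - c * n' ^ 3 : ℤ) : 𝓞 L) ∈ PP a w c := by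
          have : ((m ^ 3 - c * n' ^ 3 : ℤ) : 𝓞 L) = -(x * s x * s (s x) - (m : 𝓞 L) ^ 3) +
            w * (y * s y * s (s y) - (n' : 𝓞 L) ^ 3) - (n' : 𝓞 L) ^ 3 * ((c : 𝓞 L) - w) := by
            push_cast; linear_combination heq
          rw [this]
          exact Ideal.sub_mem _ (Ideal.add_mem _ ((Ideal.neg_mem_iff _).2 c1)
            (Ideal.mul_mem_left _ _ c2)) (Ideal.mul_mem_left _ _ q1)
        have c4 := mem_PP_int hN _ h1 _ c3
        have := Fact.mk hN
        rw [← ZMod.intCast_zmod_eq_zero_iff_dvd] at c4 hc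
        push_cast at c4 hc
        have hn0 : (n' : ZMod N) ≠ 0 := by
          intro h0
          rw [ZMod.intCast_zmod_eq_zero_iff_dvd] at h0
          obtain ⟨q, hq⟩ := h0
          apply hyP
          have : ((n' : ℤ) : 𝓞 L) ∈ PP a w c := by
            rw [hq]; push_cast
            exact Ideal.mul_mem_right _ _ (h1 ▸ Ideal.absNorm_mem _)
          simpa using Ideal.add_mem _ hn this
        have h30 : (3 : ZMod N) ≠ 0 := by
          intro h0
          have : ((3 : ℕ) : ZMod N) = 0 := by exact_mod_cast h0
          rw [ZMod.natCast_eq_zero_iff, Nat.prime_dvd_prime_iff_eq hN Nat.prime_three] at this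
          omega
        have hr : ((m : ZMod N) / n') ^ 3 = c := by
          rw [div_pow, div_eq_iff (pow_ne_zero _ hn0)]
          linear_combination c4
        set r := (m : ZMod N) / n' with hrdef
        have hc3 : (c : ZMod N) ^ 3 = 1 := by linear_combination ((c : ZMod N) - 1) * hc
        have hc1 : (c : ZMod N) ≠ 1 := by
          intro h; rw [h] at hc; apply h30; linear_combination hc
        have ho : orderOf r = 3 ^ (1 + 1) := by
          have := Fact.mk Nat.prime_three
          apply orderOf_eq_prime_pow
          · simpa [hr] using hc1
          · rw [show 3 ^ (1 + 1) = 3 * 3 by norm_num, pow_mul, hr, hc3]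
        apply hN9
        have hr0 : r ≠ 0 := by
          intro h
          rw [h] at hr
          rw [← hr] at hc; simp at hc
        have := orderOf_dvd_of_pow_eq_one (ZMod.pow_card_sub_one_eq_one hr0)
        rwa [ho] at this
  have hinf := Ideal.iInf_pow_eq_bot_of_isDomain (PP a w c) hP1.ne_top
  obtain ⟨n, hn⟩ : ∃ n, x ∉ PP a w c ^ n := by
    by_contra! hcon
    apply hx
    rw [← Ideal.mem_bot, ← hinf, Ideal.mem_iInf]
    exact hcon
  exact main n x y hx hy hn
end F2b

open scoped TensorProduct nonZeroDivisors Pointwise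
open NumberField
set_option linter.unusedSectionVars false
set_option linter.unusedVariables false

section Upper
variable {k L : Type*} [Field k] [Field L] [NumberField k] [NumberField L] [Algebra k L]
  [IsGalois k L] [IsCyclotomicExtension {3} ℚ k]

theorem gal_F2 (σ : Gal(L/k)) (hσ : ∀ g : Gal(L/k), g = 1 ∨ g = σ ∨ g = σ * σ)
    {ζ : k} (hζ : IsPrimitiveRoot ζ 3) (u : 𝓞 L) (hu : IsUnit u) (hsu : sEq σ u = u) :
    ∃ i : ℕ, u = (algebraMap (𝓞 k) (𝓞 L) hζ.toInteger) ^ i ∨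
      u = -(algebraMap (𝓞 k) (𝓞 L) hζ.toInteger) ^ i := by
  have hfix : σ (u : L) = u := by rw [← sEq_coe, hsu]
  have hall : ∀ f : Gal(L/k), f (u : L) = u := by
    intro f
    rcases hσ f with rfl | rfl | rfl
    · rfl
    · exact hfix
    · rw [AlgEquiv.mul_apply, hfix, hfix]
  obtain ⟨x, hx⟩ := (IsGalois.mem_range_algebraMap_iff_fixed (u : L)).2 hall
  have hxi : IsIntegral ℤ x := by
    rw [← isIntegral_algebraMap_iff (algebraMap k L).injective, hx]
    exact u.2
  let y : 𝓞 k := ⟨x, hxi⟩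
  have hy : algebraMap (𝓞 k) (𝓞 L) y = u := RingOfIntegers.coe_injective hx
  have hyu : IsUnit y := by
    rw [← hy] at hu
    exact (isUnit_map_iff (algebraMap (𝓞 k) (𝓞 L)) y).1 hu
  obtain ⟨v, hv⟩ := hyu
  rw [← hy, ← hv]
  have hm := IsCyclotomicExtension.Rat.Three.Units.mem hζ v
  simp only [List.mem_cons, List.not_mem_nil, or_false] at hm
  rcases hm with rfl | rfl | rfl | rfl | rfl | rfl
  · exact ⟨0, Or.inl (by simp)⟩
  · exact ⟨0, Or.inr (by simp)⟩
  · exact ⟨1, Or.inl (by simp)⟩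
  · exact ⟨1, Or.inr (by simp)⟩
  · exact ⟨2, Or.inl (by simp)⟩
  · exact ⟨2, Or.inr (by simp)⟩

theorem exists_y {N : ℕ} (hN1 : 1 ≤ N) (h9 : 9 ∣ N - 1) {a w : 𝓞 L} (ha : a ^ 3 = N) (hw : w ^ 2 + w + 1 = 0) :
    ∃ y : 𝓞 L, (w - 1) * y = a - 1 := by
  obtain ⟨m, hm⟩ := h9
  have hNm : N = 9 * m + 1 := by omega
  have hNm' : ((N : ℕ) : L) = 9 * m + 1 := by rw [hNm]; push_cast; ring
  have haL : (a : L) ^ 3 = (N : L) := by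
    have := congrArg (algebraMap (𝓞 L) L) ha
    simpa using this
  have hwL : (w : L) ^ 2 + w + 1 = 0 := by
    have := congrArg (algebraMap (𝓞 L) L) hw
    simpa using this
  have hl0 : (w : L) - 1 ≠ 0 := by
    intro h
    have : (w : L) = 1 := sub_eq_zero.1 h
    rw [this] at hwL; norm_num at hwL
  let y : L := ((a : L) - 1) / ((w : L) - 1)
  have hy : ((w : L) - 1) * y = a - 1 := mul_div_cancel₀ _ hl0
  have hal : (a : L) = 1 + (w - 1) * y := by rw [hy]; ring
  have hpoly : y ^ 3 - (w : L) ^ 2 * (w - 1) * y ^ 2 - (w : L) ^ 2 * y - m * w * (w - 1) = 0 := by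
    rw [hal, hNm'] at haL
    have hl3 : ((w : L) - 1) ^ 3 ≠ 0 := pow_ne_zero _ hl0
    apply mul_left_cancel₀ hl3
    have hw2 : (w : L) ^ 2 = - w - 1 := by linear_combination hwL
    have h3 : (w : L) ^ 3 = 1 := by linear_combination ((w : L) - 1) * hwL
    have e1 : ((w : L) - 1) ^ 3 * ((w : L) ^ 2 * (w - 1)) = - 3 * ((w : L) - 1) ^ 2 := by
      have : (w : L) ^ 2 * ((w : L) - 1) ^ 2 = -3 := by
        linear_combination ((w : L) ^ 2 - 3 * w + 3) * hwL
      linear_combination ((w : L) - 1) ^ 2 * this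
    have e2 : ((w : L) - 1) ^ 3 * (w : L) ^ 2 = - 3 * ((w : L) - 1) := by
      have : (w : L) ^ 2 * ((w : L) - 1) ^ 2 = -3 := by
        linear_combination ((w : L) ^ 2 - 3 * w + 3) * hwL
      linear_combination ((w : L) - 1) * this
    have e3 : ((w : L) - 1) ^ 3 * (w * (w - 1)) = 9 := by
      have : ((w : L) - 1) ^ 2 = -3 * w := by linear_combination hwL
      linear_combination ((w : L) * ((w - 1) ^ 2 - 3 * w)) * this + 9 * h3
    linear_combination haL - y ^ 2 * e1 - y * e2 - m * e3
  have hyi : IsIntegral (𝓞 L) y := by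
    refine ⟨Polynomial.X ^ 3 + (Polynomial.C (-(w ^ 2 * (w - 1))) * Polynomial.X ^ 2 +
      Polynomial.C (- w ^ 2) * Polynomial.X + Polynomial.C (- (m * w * (w - 1)))), ?_, ?_⟩
    · apply Polynomial.monic_X_pow_add
      compute_degree
      norm_num
    · simp only [Polynomial.eval₂_add, Polynomial.eval₂_mul, Polynomial.eval₂_C, Polynomial.eval₂_X,
        Polynomial.eval₂_pow]
      simp only [map_neg, map_mul, map_pow, map_sub, map_one, map_natCast]
      linear_combination hpoly
  obtain ⟨z, hz⟩ : ∃ z : 𝓞 L, (z : L) = y := ⟨⟨y, isIntegral_trans y hyi⟩, rfl⟩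
  refine ⟨z, ?_⟩
  apply RingOfIntegers.coe_injective
  rw [map_mul, map_sub, map_sub, map_one]
  rw [← hz] at hy
  exact hy

theorem upper_L (σ : Gal(L/k)) (hσ : ∀ g : Gal(L/k), g = 1 ∨ g = σ ∨ g = σ * σ)
    (hσ3 : σ * σ * σ = 1) (hcard : Nat.card Gal(L/k) = 3) (h6 : Module.finrank ℚ L = 6)
    {N : ℕ} (hN : N.Prime) (hN3 : N % 3 = 1) {a w : 𝓞 L} (ha : a ^ 3 = N)
    {ζ : k} (hζ : IsPrimitiveRoot ζ 3) (hwζ : algebraMap (𝓞 k) (𝓞 L) hζ.toInteger = w)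
    (hsa : sEq σ a = w * a) (t : 𝓞 L ≃+* 𝓞 L) (hta : t a = a) (htw : t w = w ^ 2) :
    Nat.card {c : ClassGroup (𝓞 L) // clMap (sEq σ) c = c} ≤ 3 := by
  have hpid : IsPrincipalIdealRing (𝓞 k) := IsCyclotomicExtension.Rat.three_pid k
  have hzw : hζ.toInteger ^ 2 + hζ.toInteger + 1 = 0 := by
    have h := hζ.toInteger_isPrimitiveRoot.isRoot_cyclotomic (by norm_num : 0 < 3)
    rw [Polynomial.cyclotomic_three, Polynomial.IsRoot] at h
    simpa using h
  have hw : w ^ 2 + w + 1 = 0 := by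
    rw [← hwζ, ← map_pow, ← map_add, ← map_one (algebraMap (𝓞 k) (𝓞 L)), ← map_add, hzw, map_zero]
  have hw3 : w ^ 3 = 1 := by linear_combination (w - 1) * hw
  have hsw : sEq σ w = w := by rw [← hwζ, sEq_alg]
  have hs3 : ∀ x, sEq σ (sEq σ (sEq σ x)) = x := by
    intro x
    apply RingOfIntegers.coe_injective
    change σ (σ (σ (x : L))) = x
    rw [← AlgEquiv.mul_apply, ← AlgEquiv.mul_apply, hσ3]; rfl
  have ha0 : a ≠ 0 := by
    rintro rfl
    have : ((N : ℕ) : 𝓞 L) = 0 := by rw [← ha]; simp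
    exact hN.ne_zero (by exact_mod_cast this)
  obtain ⟨c, hc⟩ := exists_c hN hN3
  have hmul := PP_mul (by omega) ha hw c hc
  obtain ⟨n1, n2⟩ := PP_norm h6 hN (by omega) ha hw c hc t hta htw
  have hP1 := PP_prime hN _ n1
  have hP2 := PP_prime hN _ n2
  have hP10 : PP a w c ≠ ⊥ := by
    intro h; rw [h] at n1; simp at n1; exact hN.ne_zero n1.symm
  have hP20 : PP a (w ^ 2) c ≠ ⊥ := by
    intro h; rw [h] at n2; simp at n2; exact hN.ne_zero n2.symm
  have hsP1 : (PP a w c).map (sEq σ) = PP a w c := by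
    rw [PP_map, hsa, hsw, PP_unit a w c w (w ^ 2) (by rw [← hw3]; ring)]
  have F2 : ∀ u, IsUnit u → sEq σ u = u → ∃ i : ℕ, u = w^i ∨ u = -w^i := by
    intro u hu hsu
    have := gal_F2 σ hσ hζ u hu hsu
    rwa [hwζ] at this
  have F3 := gal_F3 h6 (sEq σ) hs3 w hw3 hsw F2
  have F0 := gal_F0 σ hσ hσ3 hcard
  have F1a : ∀ P : Ideal (𝓞 L), P.IsPrime → P ≠ ⊥ → P.map (sEq σ) = P →
      P = PP a w c ∨ P = PP a (w ^ 2) c ∨ (a ∉ P ∧ w - 1 ∈ P) ∨ ∃ d, sEq σ d = d ∧ P = Ideal.span {d} := by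
    intro P hP hP0 hsP
    by_cases haP : a ∈ P
    · have hle : PP a w c * PP a (w ^ 2) c ≤ P := by
        rw [hmul, Ideal.span_singleton_le_iff_mem]; exact haP
      rcases (Ideal.IsPrime.mul_le hP).1 hle with h | h
      · left; exact ((hP1.isMaximal hP10).eq_of_le hP.ne_top h).symm
      · right; left; exact ((hP2.isMaximal hP20).eq_of_le hP.ne_top h).symm
    · right; right
      by_cases hwP : w - 1 ∈ P
      · left; exact ⟨haP, hwP⟩
      · right
        refine gal_unram σ hσ hσ3 hcard P hP0 hsP a ?_
        rw [hsa, show w * a - a = (w - 1) * a by ring]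
        intro h
        rcases hP.mem_or_mem h with h | h
        · exact hwP h
        · exact haP h
  have h30 : (3 : 𝓞 L) ≠ 0 := by norm_num
  have hfin : Finite (ClassGroup (𝓞 L)) := inferInstance
  by_cases h9 : 9 ∣ N - 1
  · obtain ⟨y, hy⟩ := exists_y hN.one_le h9 ha hw
    refine core (sEq σ) hs3 w a hw hsw ha0 hsa h30 _ _ ⊤ hmul hsP1 top_ne_bot
      (Ideal.map_top _) F0 ?_ F2 F3 (Or.inl rfl)
    intro P hP hP0 hsP
    rcases F1a P hP hP0 hsP with h | h | h | h
    · exact Or.inl h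
    · exact Or.inr (Or.inl h)
    · refine Or.inr (Or.inr (Or.inr ?_))
      refine gal_unram σ hσ hσ3 hcard P hP0 hsP y ?_
      have hl0 : w - 1 ≠ 0 := by
        intro h
        rw [sub_eq_zero.1 h] at hw; norm_num at hw
      have : sEq σ y - y = a := by
        apply mul_left_cancel₀ hl0
        have h2 := congrArg (sEq σ) hy
        rw [map_mul, map_sub, map_sub, hsw, map_one, hsa] at h2
        linear_combination h2 - hy
      rw [this]; exact h.1
    · exact Or.inr (Or.inr (Or.inr h))
  · have F4 := gal_F4 hN h9 hN3 ha0 ha hw c hc (sEq σ) hsa hsw n1 n2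
    by_cases hQ : ∃ Q : Ideal (𝓞 L), Q.IsPrime ∧ Q ≠ ⊥ ∧ Q.map (sEq σ) = Q ∧ w - 1 ∈ Q
    · obtain ⟨Q, hQp, hQ0, hsQ, hwQ⟩ := hQ
      refine core (sEq σ) hs3 w a hw hsw ha0 hsa h30 _ _ Q hmul hsP1 hQ0
        hsQ F0 ?_ F2 F3 (Or.inr F4)
      intro P hP hP0 hsP
      rcases F1a P hP hP0 hsP with h | h | h | h
      · exact Or.inl h
      · exact Or.inr (Or.inl h)
      · refine Or.inr (Or.inr (Or.inl ?_))
        have : Fact (Nat.Prime 3) := ⟨Nat.prime_three⟩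
        refine gal_unique σ hσ P Q hsP (hζ.toInteger - 1) hζ.zeta_sub_one_prime' ?_ ?_
        · rw [map_sub, hwζ, map_one]; exact h.2
        · rw [map_sub, hwζ, map_one]; exact hwQ
      · exact Or.inr (Or.inr (Or.inr h))
    · refine core (sEq σ) hs3 w a hw hsw ha0 hsa h30 _ _ ⊤ hmul hsP1 top_ne_bot
        (Ideal.map_top _) F0 ?_ F2 F3 (Or.inl rfl)
      intro P hP hP0 hsP
      rcases F1a P hP hP0 hsP with h | h | h | h
      · exact Or.inl h
      · exact Or.inr (Or.inl h)
      · exact absurd ⟨P, hP, hP0, hsP, h.2⟩ hQ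
      · exact Or.inr (Or.inr (Or.inr h))
end Upper

open scoped TensorProduct nonZeroDivisors Pointwise
open NumberField
set_option linter.unusedSectionVars false
set_option linter.unusedVariables false

section Torsion
variable {K k L : Type*} [Field K] [NumberField K] [Field k] [Field L] [NumberField k] [NumberField L]
  [Algebra k L] [Algebra K L] [IsGalois k L] [IsCyclotomicExtension {3} ℚ k]

theorem map_two {A B : Type*} [CommRing A] [CommRing B] (f : A →+* B) (s t u : B ≃+* B)
    (h : ∀ x, t (s (f x)) = u (s (f x))) (I : Ideal A) :
    ((I.map f).map s).map t = ((I.map f).map s).map u := by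
  change ((I.map f).map (s : B →+* B)).map (t : B →+* B) =
      ((I.map f).map (s : B →+* B)).map (u : B →+* B)
  rw [Ideal.map_map, Ideal.map_map, Ideal.map_map, Ideal.map_map]
  congr 1
  ext1 x
  exact h x

theorem map_one' {A B : Type*} [CommRing A] [CommRing B] (f : A →+* B) (t : B ≃+* B)
    (h : ∀ x, t (f x) = f x) (I : Ideal A) : (I.map f).map t = I.map f := by
  change (I.map f).map (t : B →+* B) = I.map f
  rw [Ideal.map_map]
  congr 1
  ext1 x
  exact h x

theorem torsion_bound (σ : Gal(L/k)) (hσ : ∀ g : Gal(L/k), g = 1 ∨ g = σ ∨ g = σ * σ)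
    (hσ3 : σ * σ * σ = 1) (hcard : Nat.card Gal(L/k) = 3) (h6 : Module.finrank ℚ L = 6)
    (h2 : Module.finrank K L = 2) (hK3 : Module.finrank ℚ K = 3)
    {N : ℕ} (hN : N.Prime) (hN3 : N % 3 = 1) {α : K} (hα : α ^ 3 = (N : K))
    {a0 : 𝓞 K} (ha0 : (a0 : K) = α)
    {ζ : k} (hζ : IsPrimitiveRoot ζ 3)
    (hsa : σ (algebraMap K L α) = algebraMap k L ζ * algebraMap K L α)
    (τ : Gal(L/K)) (hτ : τ (algebraMap k L ζ) = (algebraMap k L ζ) ^ 2) :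
    Nat.card {c : ClassGroup (𝓞 K) // c ^ 3 = 1} ≤ 3 := by
  have hpid : IsPrincipalIdealRing (𝓞 k) := IsCyclotomicExtension.Rat.three_pid k
  have hinj : Function.Injective (algebraMap (𝓞 K) (𝓞 L)) := FaithfulSMul.algebraMap_injective _ _
  have ha0' : a0 ^ 3 = (N : 𝓞 K) := by
    apply RingOfIntegers.coe_injective
    rw [map_pow, map_natCast]
    change (a0 : K) ^ 3 = N
    rw [ha0, hα]
  -- the automorphisms on `𝓞 K`
  have hcomp : ∀ x : K, τ (σ (algebraMap K L x)) = σ (σ (algebraMap K L x)) := by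
    let f : K →ₐ[ℚ] L := ((τ : L →+* L).comp ((σ : L →+* L).comp (algebraMap K L))).toRatAlgHom
    let g : K →ₐ[ℚ] L := ((σ : L →+* L).comp ((σ : L →+* L).comp (algebraMap K L))).toRatAlgHom
    have hfg : ∀ x : K, f x = g x := by
      intro x
      have hx : x ∈ IntermediateField.adjoin ℚ {α} := by
        rw [K_adjoin hN hα hK3]; trivial
      have hle : IntermediateField.adjoin ℚ {α} ≤ AlgHom.fieldRange (AlgHom.id ℚ K) := by
        intro x _; exact ⟨x, rfl⟩
      induction hx using IntermediateField.adjoin_induction with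
      | mem x hx =>
        rw [Set.mem_singleton_iff] at hx
        subst hx
        change τ (σ (algebraMap K L x)) = σ (σ (algebraMap K L x))
        rw [hsa, map_mul, map_mul, τ.commutes, hsa, hτ, σ.commutes]; ring
      | algebraMap x => rw [f.commutes, g.commutes]
      | add x y _ _ hx hy => rw [map_add, map_add, hx, hy]
      | inv x _ hx => rw [map_inv₀, map_inv₀, hx]
      | mul x y _ _ hx hy => rw [map_mul, map_mul, hx, hy]
    exact hfg
  have hcompO : ∀ x : 𝓞 K, sEq τ (sEq σ (algebraMap (𝓞 K) (𝓞 L) x)) =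
      sEq σ (sEq σ (algebraMap (𝓞 K) (𝓞 L) x)) := by
    intro x
    exact RingOfIntegers.coe_injective (hcomp (x : K))
  have htO : ∀ x : 𝓞 K, sEq τ (algebraMap (𝓞 K) (𝓞 L) x) = algebraMap (𝓞 K) (𝓞 L) x := by
    intro x
    exact RingOfIntegers.coe_injective (τ.commutes (x : K))
  have hA := upper_L σ hσ hσ3 hcard h6 hN hN3 (a := algebraMap (𝓞 K) (𝓞 L) a0)
    (w := algebraMap (𝓞 k) (𝓞 L) hζ.toInteger) (by rw [← map_pow, ha0', map_natCast]) hζ rfl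
    (by apply RingOfIntegers.coe_injective; rw [map_mul]; change σ (algebraMap K L (a0 : K)) = algebraMap k L ζ * algebraMap K L (a0 : K); rw [ha0, hsa])
    (sEq τ) (htO a0) (by apply RingOfIntegers.coe_injective; rw [map_pow]; exact hτ)
  refine aux_torsion (clHom (algebraMap (𝓞 K) (𝓞 L)) hinj) (clMap (sEq σ)) (clMap (sEq τ))
    ?_ ?_ ?_ ?_ hA
  · intro c hc3 hc
    obtain ⟨I, hI, rfl⟩ := exists_cls c
    rw [clHom_cls] at hc
    obtain ⟨d, hd⟩ := cls_eq_one hc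
    have hr := Ideal.relNorm_algebraMap (𝓞 L) I
    rw [hd, Ideal.relNorm_singleton, ← IsFractionRing.finrank_eq (𝓞 K) K (𝓞 L) L, h2] at hr
    have hI2 : I ^ 2 ≠ ⊥ := pow_ne_zero 2 hI
    have h1 : cls I hI ^ 2 = 1 := by
      rw [← cls_pow I hI 2 hI2, cls_congr hr.symm hI2 (hr ▸ hI2), cls_span]
    calc cls I hI = cls I hI ^ 3 * (cls I hI ^ 2)⁻¹ := by group
      _ = 1 := by rw [hc3, h1]; simp
  · intro c
    obtain ⟨I, hI, rfl⟩ := exists_cls c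
    rw [clHom_cls, clMap_cls]
    apply cls_congr
    exact map_one' _ _ htO I
  · intro c
    obtain ⟨I, hI, rfl⟩ := exists_cls c
    rw [clHom_cls, clMap_cls, clMap_cls, clMap_cls]
    apply cls_congr
    exact map_two _ _ _ _ hcompO I
  · intro c
    obtain ⟨I, hI, rfl⟩ := exists_cls c
    have hJ : I.map (algebraMap (𝓞 K) (𝓞 L)) ≠ ⊥ := map_ne_bot'' _ hinj hI
    obtain ⟨d, hd0, hsd, hd⟩ := gal_F0 σ hσ hσ3 hcard _ hJ
    have b1 := map_ne_bot' (sEq σ) hJ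
    have b2 := map_ne_bot' (sEq σ) b1
    rw [clHom_cls, clMap_cls, clMap_cls, ← cls_mul _ _ _ _ (mul_ne_zero hJ b1),
      ← cls_mul _ _ _ _ (mul_ne_zero (mul_ne_zero hJ b1) b2), cls_congr hd _ (span_ne_bot hd0), cls_span]

end Torsion

section Final

theorem K_noroot {K : Type*} [Field K] [NumberField K] (hK3 : Module.finrank ℚ K = 3) (z : K) :
    z ^ 2 + z + 1 ≠ 0 := by
  intro h
  have hz3 : z ^ 3 = 1 := by linear_combination (z - 1) * h
  have hz1 : z ≠ 1 := by rintro rfl; norm_num at h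
  have : Fact (Nat.Prime 3) := ⟨Nat.prime_three⟩
  have hp : IsPrimitiveRoot z 3 := by
    rw [IsPrimitiveRoot.iff_orderOf]; exact orderOf_eq_prime hz3 hz1
  have hm := Polynomial.cyclotomic_eq_minpoly_rat hp (by norm_num)
  have hd := minpoly.degree_dvd (K := ℚ) (Algebra.IsIntegral.isIntegral (R := ℚ) z)
  rw [← hm, Polynomial.natDegree_cyclotomic, hK3] at hd
  rw [show Nat.totient 3 = 2 by decide] at hd
  omega

theorem torsion_K {K : Type*} [Field K] [NumberField K] (L : Type*) [Field L] [NumberField L]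
    [Algebra K L] [IsCyclotomicExtension {3} K L] (hK3 : Module.finrank ℚ K = 3)
    {N : ℕ} (hN : N.Prime) (hN3 : N % 3 = 1) {α : K} (hα : α ^ 3 = (N : K))
    {a0 : 𝓞 K} (ha0 : (a0 : K) = α) :
    Nat.card {c : ClassGroup (𝓞 K) // c ^ 3 = 1} ≤ 3 := by
  have hf3 : Fact (Nat.Prime 3) := ⟨Nat.prime_three⟩
  have ht3 : Nat.totient 3 = 2 := by decide
  have hirr : Irreducible (Polynomial.cyclotomic 3 K) := by
    apply Polynomial.irreducible_of_degree_le_three_of_not_isRoot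
    · rw [Polynomial.natDegree_cyclotomic, ht3]; decide
    · intro z hz
      rw [Polynomial.cyclotomic_three, Polynomial.IsRoot] at hz
      exact K_noroot hK3 z (by simpa using hz)
  have h2 : Module.finrank K L = 2 := by
    rw [IsCyclotomicExtension.finrank (n := 3) L hirr, ht3]
  have h6 : Module.finrank ℚ L = 6 := by
    rw [← Module.finrank_mul_finrank ℚ K L, hK3, h2]
  have hz := IsCyclotomicExtension.zeta_spec 3 K L
  set z : L := IsCyclotomicExtension.zeta 3 K L with hzdef
  let k : IntermediateField ℚ L := IntermediateField.adjoin ℚ {z}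
  have hcyc : IsCyclotomicExtension {3} ℚ k :=
    hz.intermediateField_adjoin_isCyclotomicExtension ℚ
  have hk2 : Module.finrank ℚ k = 2 := by
    rw [IsCyclotomicExtension.Rat.finrank 3 k, ht3]
  have hk3 : Module.finrank k L = 3 := by
    have := Module.finrank_mul_finrank ℚ k L
    rw [hk2, h6] at this; omega
  let A : L := algebraMap K L α
  have hA : A ^ 3 = (N : L) := by
    change (algebraMap K L α) ^ 3 = _
    rw [← map_pow, hα, map_natCast]
  let z0 : k := ⟨z, IntermediateField.mem_adjoin_simple_self ℚ z⟩
  have hz0 : IsPrimitiveRoot z0 3 :=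
    IsPrimitiveRoot.of_map_of_injective (f := algebraMap k L) hz (algebraMap k L).injective
  have hgen : IntermediateField.adjoin k {A} = ⊤ := by
    have hIntg : IsIntegral k A := Algebra.IsIntegral.isIntegral A
    apply IntermediateField.eq_of_le_of_finrank_eq le_top
    rw [IntermediateField.adjoin.finrank hIntg, IntermediateField.finrank_top', hk3]
    have hd := minpoly.degree_dvd (K := k) hIntg
    rw [hk3, Nat.dvd_prime Nat.prime_three] at hd
    rcases hd with hd | hd
    · exfalso
      rw [minpoly.natDegree_eq_one_iff] at hd
      obtain ⟨x, hx⟩ := hd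
      have e1 : minpoly ℚ x = minpoly ℚ α := by
        rw [← minpoly.algebraMap_eq (algebraMap k L).injective x, hx]
        exact minpoly.algebraMap_eq (algebraMap K L).injective α
      have hd := minpoly.degree_dvd (K := ℚ) (Algebra.IsIntegral.isIntegral (R := ℚ) x)
      rw [e1, K_minpoly hN hα hK3, Polynomial.natDegree_X_pow_sub_C, hk2] at hd
      omega
    · exact hd
  have hgal : IsGalois k L := by
    have : Polynomial.IsSplittingField k L (Polynomial.X ^ Module.finrank k L - Polynomial.C (N : k)) := by
      refine isSplittingField_X_pow_sub_C_of_root_adjoin_eq_top (α := A) ?_ ?_ hgen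
      · rw [hk3]
        exact ⟨z0, (mem_primitiveRoots (by norm_num)).2 hz0⟩
      · rw [hk3, hA, map_natCast]
    have hnorm : Normal k L := Normal.of_isSplittingField
      (Polynomial.X ^ Module.finrank k L - Polynomial.C (N : k))
    exact ⟨⟩
  have hcard : Nat.card Gal(L/k) = 3 := by rw [IsGalois.card_aut_eq_finrank, hk3]
  have hfin : Finite Gal(L/k) := Nat.finite_of_card_ne_zero (by rw [hcard]; norm_num)
  have hnt : Nontrivial Gal(L/k) := Finite.one_lt_card_iff_nontrivial.1 (by rw [hcard]; norm_num)
  obtain ⟨σ, hσ1⟩ := exists_ne (1 : Gal(L/k))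
  have hσ3' : σ ^ 3 = 1 := hcard ▸ (pow_card_eq_one' (x := σ))
  have hσ3 : σ * σ * σ = 1 := by rw [← hσ3', pow_succ, pow_two]
  have hσ : ∀ g : Gal(L/k), g = 1 ∨ g = σ ∨ g = σ * σ := by
    intro g
    obtain ⟨n, hn⟩ := mem_powers_of_prime_card (g' := g) hcard hσ1
    have hn' : σ ^ n = g := hn
    rw [← Nat.div_add_mod n 3, pow_add, pow_mul, hσ3', one_pow, one_mul] at hn'
    have : n % 3 < 3 := Nat.mod_lt _ (by norm_num)
    interval_cases h : n % 3
    · left; simpa using hn'.symm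
    · right; left; simpa using hn'.symm
    · right; right; rw [← hn', sq]
  have hA0 : A ≠ 0 := by
    intro h
    rw [h] at hA
    have : (N : L) = 0 := by rw [← hA]; simp
    exact hN.ne_zero (by exact_mod_cast this)
  have hw3 : (σ A / A) ^ 3 = 1 := by
    rw [div_pow, ← map_pow, hA, map_natCast, div_self]
    rw [← hA]; exact pow_ne_zero _ hA0
  obtain ⟨i, -, hi⟩ := hz.eq_pow_of_pow_eq_one hw3
  have hw1 : σ A / A ≠ 1 := by
    intro h
    rw [div_eq_one_iff_eq hA0] at h
    apply hσ1
    ext x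
    have hx : x ∈ IntermediateField.adjoin k {A} := by rw [hgen]; trivial
    change σ x = x
    induction hx using IntermediateField.adjoin_induction with
    | mem x hx => rw [Set.mem_singleton_iff] at hx; rw [hx, h]
    | algebraMap x => exact σ.commutes x
    | add x y _ _ hx hy => rw [map_add, hx, hy]
    | inv x _ hx => rw [map_inv₀, hx]
    | mul x y _ _ hx hy => rw [map_mul, hx, hy]
  let ζ : k := z0 ^ i
  have hζL : algebraMap k L ζ = σ A / A := by
    rw [← hi]; rfl
  have hwp : IsPrimitiveRoot (σ A / A) 3 := by
    rw [IsPrimitiveRoot.iff_orderOf]; exact orderOf_eq_prime hw3 hw1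
  have hζ : IsPrimitiveRoot ζ 3 :=
    IsPrimitiveRoot.of_map_of_injective (f := algebraMap k L) (by rw [hζL]; exact hwp)
      (algebraMap k L).injective
  have hwq : (σ A / A) ^ 2 + σ A / A + 1 = 0 := by
    have : (σ A / A - 1) * ((σ A / A) ^ 2 + σ A / A + 1) = 0 := by linear_combination hw3
    exact (mul_eq_zero.1 this).resolve_left (sub_ne_zero.2 hw1)
  have hgalK : IsGalois K L := IsCyclotomicExtension.isGalois {3} K L
  obtain ⟨τ, hτ⟩ : ∃ τ : Gal(L/K), τ (σ A / A) ≠ σ A / A := by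
    by_contra! hcon
    obtain ⟨x, hx⟩ := (IsGalois.mem_range_algebraMap_iff_fixed (F := K) (σ A / A)).2 hcon
    apply K_noroot hK3 x
    apply (algebraMap K L).injective
    rw [map_add, map_add, map_pow, hx, map_one, map_zero, hwq]
  have hτ2 : τ (σ A / A) = (σ A / A) ^ 2 := by
    generalize σ A / A = w at *
    have h1 : τ w ^ 2 + τ w + 1 = 0 := by
      rw [← map_pow, ← map_add, ← map_one τ, ← map_add, hwq, map_zero]
    have : (τ w - w) * (τ w - w ^ 2) = 0 := by
      linear_combination h1 + (- τ w + w - 1) * hwq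
    rcases mul_eq_zero.1 this with h | h
    · exact absurd (sub_eq_zero.1 h) hτ
    · exact sub_eq_zero.1 h
  refine torsion_bound σ hσ hσ3 hcard h6 h2 hK3 hN hN3 hα ha0 hζ ?_ τ ?_
  · rw [hζL]; exact (div_mul_cancel₀ _ hA0).symm
  · rw [hζL, hτ2]

theorem final_rank {K : Type*} [Field K] [NumberField K] (hK3 : Module.finrank ℚ K = 3)
    {N : ℕ} (hN : N.Prime) (hN3 : N % 3 = 1) {α : K} (hα : α ^ 3 = (N : K)) :
    pRank 3 (ClassGroup (𝓞 K)) = 1 := by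
  have hIntg : IsIntegral ℤ α := by
    apply IsIntegral.of_pow (n := 3) (by norm_num)
    rw [hα, show ((N : ℕ) : K) = algebraMap ℤ K (N : ℤ) by simp]; exact isIntegral_algebraMap
  obtain ⟨a, ha⟩ : ∃ a : 𝓞 K, (a : K) = α := ⟨⟨α, hIntg⟩, rfl⟩
  exact aux_pRank _ (lower hN hN3 hα hK3 ha) (torsion_K (CyclotomicField 3 K) hK3 hN hN3 hα ha)
end Final

/-- For `p = 3` and a prime `N ≡ 1 (mod 3)`, the `3`-rank of the class group of
`K = ℚ(N^{1/3})` equals `1`. -/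
theorem statement7 (N : ℕ) (hN : N.Prime) (hNmod : N % 3 = 1)
    (K : Type*) [Field K] [NumberField K]
    (α : K) (hα : α ^ 3 = (N : K)) (hKdeg : Module.finrank ℚ K = 3) :
    classRank 3 K = 1 := by
  exact final_rank hKdeg hN hNmod hα
end

section
/- Let p be an odd prime and let N be a prime with N ≡ 1 (mod p). Then r_K ≥ 1; equivalently, p divides the class number of K = ℚ(N^{1/p}). -/
open scoped TensorProduct

lemma aux_not_pow (p N : ℕ) (hp : p.Prime) (hN : N.Prime) (b : ℚ) : b ^ p ≠ (N : ℚ) := by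
  intro h
  have := Fact.mk hN
  have h1 := congrArg (padicValRat N) h
  have hb : b ≠ 0 := by
    rintro rfl
    rw [zero_pow hp.ne_zero] at h
    exact hN.ne_zero (by exact_mod_cast h.symm)
  rw [padicValRat.pow, padicValRat.self hN.one_lt] at h1
  have : (p : ℤ) ∣ 1 := ⟨_, h1.symm⟩
  have h2 : p ∣ 1 := by exact_mod_cast this
  exact hp.one_lt.ne' (Nat.dvd_one.mp h2)

lemma aux_norm (p N : ℕ) (hp : p.Prime) (hpodd : Odd p) (hN : N.Prime)
    (K : Type*) [Field K] [NumberField K]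
    (α : K) (hα : α ^ p = (N : K)) (hKdeg : Module.finrank ℚ K = p) (a : ℚ) :
    Algebra.norm ℚ (α - algebraMap ℚ K a) = N - a ^ p := by
  have hirr := X_pow_sub_C_irreducible_of_prime hp (aux_not_pow p N hp hN)
  have hmin : minpoly ℚ α = Polynomial.X ^ p - Polynomial.C (N : ℚ) := by
    symm
    apply minpoly.eq_of_irreducible_of_monic hirr
    · simp [hα]
    · exact Polynomial.monic_X_pow_sub_C _ hp.ne_zero
  set x := α - algebraMap ℚ K a with hx
  have hminx : minpoly ℚ x =
      (Polynomial.X ^ p - Polynomial.C (N : ℚ)).comp (Polynomial.X + Polynomial.C a) := by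
    rw [hx, minpoly.sub_algebraMap, hmin]
  have hint : IsIntegral ℚ x := Algebra.IsIntegral.isIntegral x
  have hdeg : (minpoly ℚ x).natDegree = p := by
    rw [hminx, Polynomial.natDegree_comp, Polynomial.natDegree_X_add_C,
      Polynomial.natDegree_X_pow_sub_C, mul_one]
  have hfr : Module.finrank (IntermediateField.adjoin ℚ {x}) K = 1 := by
    have h1 := Module.finrank_mul_finrank ℚ (IntermediateField.adjoin ℚ {x}) K
    rw [IntermediateField.adjoin.finrank hint, hdeg, hKdeg] at h1
    exact Nat.eq_of_mul_eq_mul_left hp.pos (by omega)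
  rw [Algebra.norm_eq_norm_adjoin, hfr, pow_one]
  have h2 := Algebra.PowerBasis.norm_gen_eq_coeff_zero_minpoly
    (IntermediateField.adjoin.powerBasis hint)
  rw [IntermediateField.adjoin.powerBasis_gen, IntermediateField.adjoin.powerBasis_dim, hdeg,
    IntermediateField.minpoly_gen, hminx, Polynomial.coeff_zero_eq_eval_zero] at h2
  rw [h2, hpodd.neg_one_pow]
  simp

lemma aux_norm_int (p N : ℕ) (hp : p.Prime) (hpodd : Odd p) (hN : N.Prime)
    (K : Type*) [Field K] [NumberField K]
    (β : NumberField.RingOfIntegers K) (hβ : β ^ p = (N : NumberField.RingOfIntegers K))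
    (hKdeg : Module.finrank ℚ K = p) (a : ℤ) :
    Algebra.norm ℤ (β - (a : NumberField.RingOfIntegers K)) = N - a ^ p := by
  have h := aux_norm p N hp hpodd hN K (β : K) (by
    have := congrArg (algebraMap (NumberField.RingOfIntegers K) K) hβ
    simpa using this) hKdeg a
  have h2 := Algebra.coe_norm_int (β - (a : NumberField.RingOfIntegers K))
  have h3 : ((Algebra.norm ℤ (β - (a : NumberField.RingOfIntegers K)) : ℤ) : ℚ) = N - a ^ p := by
    rw [h2, ← h]
    simp
  exact_mod_cast h3

lemma aux_int_rep (N : ℕ) (hN : N.Prime)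
    (K : Type*) [Field K] [NumberField K]
    (β : NumberField.RingOfIntegers K) (hβ : (Algebra.norm ℤ β).natAbs = N)
    (γ : NumberField.RingOfIntegers K) :
    ∃ (c : ℤ) (δ : NumberField.RingOfIntegers K), γ = c + β * δ := by
  have := Fact.mk hN
  have hcard : Nat.card (NumberField.RingOfIntegers K ⧸ Ideal.span {β}) = N := by
    rw [← hβ, ← Ideal.absNorm_span_singleton]
    rfl
  have hsurj : Function.Surjective
      (Int.castRingHom (NumberField.RingOfIntegers K ⧸ Ideal.span {β})) := by
    have : Fact (Nat.card (NumberField.RingOfIntegers K ⧸ Ideal.span {β})).Prime :=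
      ⟨hcard ▸ hN⟩
    have hfin : Finite (NumberField.RingOfIntegers K ⧸ Ideal.span {β}) :=
      Nat.finite_of_card_ne_zero (by rw [hcard]; exact hN.ne_zero)
    have : Nontrivial (NumberField.RingOfIntegers K ⧸ Ideal.span {β}) := by
      rw [← Finite.one_lt_card_iff_nontrivial, hcard]; exact hN.one_lt
    intro y
    have h := mem_zmultiples_of_prime_card (p := N)
      (g := (1 : NumberField.RingOfIntegers K ⧸ Ideal.span {β})) (g' := y) hcard one_ne_zero
    obtain ⟨k, hk⟩ := h
    exact ⟨k, by simpa using hk⟩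
  obtain ⟨c, hc⟩ := hsurj (Ideal.Quotient.mk _ γ)
  have : Ideal.Quotient.mk (Ideal.span {β}) (γ - c) = 0 := by
    rw [map_sub, ← hc]; simp
  rw [Ideal.Quotient.eq_zero_iff_mem, Ideal.mem_span_singleton] at this
  obtain ⟨δ, hδ⟩ := this
  exact ⟨c, δ, by rw [← hδ]; ring⟩

lemma aux_norm_mod (p N : ℕ) (hN : N.Prime)
    (K : Type*) [Field K] [NumberField K]
    (β δ : NumberField.RingOfIntegers K) (hβ : β ^ p = (N : NumberField.RingOfIntegers K))
    (hKdeg : Module.finrank ℚ K = p) (c : ℤ) :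
    ((Algebra.norm ℤ ((c : NumberField.RingOfIntegers K) - β * δ) : ℤ) : ZMod N)
      = (c : ZMod N) ^ p := by
  have := Fact.mk hN
  classical
  let b := NumberField.RingOfIntegers.basis K
  set M := Algebra.leftMulMatrix b (β * δ) with hM
  have hcard : Fintype.card (Module.Free.ChooseBasisIndex ℤ (NumberField.RingOfIntegers K)) = p := by
    rw [← Module.finrank_eq_card_chooseBasisIndex, NumberField.RingOfIntegers.rank, hKdeg]
  let f := Int.castRingHom (ZMod N)
  have hpow : M ^ p = (N : Matrix _ _ ℤ) * Algebra.leftMulMatrix b (δ ^ p) := by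
    rw [hM, ← map_pow, mul_pow, hβ, map_mul, map_natCast]
  have hnil : IsNilpotent (f.mapMatrix M) := by
    refine ⟨p, ?_⟩
    rw [← map_pow, hpow, map_mul, map_natCast]
    have : (N : Matrix (Module.Free.ChooseBasisIndex ℤ (NumberField.RingOfIntegers K))
      (Module.Free.ChooseBasisIndex ℤ (NumberField.RingOfIntegers K)) (ZMod N)) = 0 := by
      rw [← Matrix.diagonal_natCast]; simp
    rw [this, zero_mul]
  have h1 := (Matrix.isNilpotent_charpoly_sub_pow_of_isNilpotent hnil).eq_zero
  rw [hcard, sub_eq_zero] at h1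
  have h2 : Algebra.norm ℤ ((c : NumberField.RingOfIntegers K) - β * δ)
      = (Matrix.scalar _ c - M).det := by
    rw [Algebra.norm_eq_matrix_det b, map_sub, map_intCast]
    congr 2
  rw [h2, ← Matrix.eval_charpoly]
  have h3 : f.mapMatrix M = M.map f := rfl
  rw [h3, Matrix.charpoly_map] at h1
  have h4 := congrArg (Polynomial.eval (f c)) h1
  rw [Polynomial.eval_map_apply] at h4
  simpa [f] using h4

lemma aux_tensor (p : ℕ) (hp : p.Prime) (G : Type*) [CommGroup G] [Finite G]
    (h : p ∣ Nat.card G) : 1 ≤ Module.finrank (ZMod p) (ZMod p ⊗[ℤ] Additive G) := by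
  have := Fact.mk hp
  let A := Additive G
  obtain ⟨x, hx⟩ : ∃ x : A, ∀ y : A, p • y ≠ x := by
    by_contra! hcon
    have hsurj : Function.Surjective (fun y : G => y ^ p) := fun x => hcon x
    have hinj := Finite.injective_iff_surjective.mpr hsurj
    obtain ⟨g, hg⟩ := exists_prime_orderOf_dvd_card' p h
    have : g = 1 := hinj (by simp [← hg, pow_orderOf_eq_one])
    rw [this, orderOf_one] at hg
    exact hp.one_lt.ne hg
  let S : AddSubgroup A := (nsmulAddMonoidHom p : A →+ A).range
  have hz : ∀ x : A ⧸ S, p • x = 0 := by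
    intro x
    obtain ⟨y, rfl⟩ := QuotientAddGroup.mk_surjective x
    rw [← QuotientAddGroup.mk_nsmul, QuotientAddGroup.eq_zero_iff]
    exact ⟨y, rfl⟩
  let _ : Module (ZMod p) (A ⧸ S) := AddCommGroup.zmodModule hz
  let B : ZMod p →+ A →+ A ⧸ S :=
    AddMonoidHom.mk' (fun a => (DistribSMul.toAddMonoidHom (A ⧸ S) a).comp (QuotientAddGroup.mk' S))
      (by intro a b; ext y; simp [add_smul])
  let F : ZMod p ⊗[ℤ] A →+ A ⧸ S := TensorProduct.liftAddHom B (by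
    intro r m n
    rw [map_zsmul, map_zsmul]; rfl)
  have hne : (1 : ZMod p) ⊗ₜ[ℤ] x ≠ 0 := by
    intro h0
    have h1 := congrArg F h0
    have h2 : F ((1 : ZMod p) ⊗ₜ[ℤ] x) = (x : A ⧸ S) := by
      simp [F, B]
    rw [h2, map_zero, QuotientAddGroup.eq_zero_iff] at h1
    obtain ⟨y, hy⟩ := h1
    exact hx y hy
  have : Nontrivial (ZMod p ⊗[ℤ] A) := ⟨_, _, hne⟩
  exact Module.finrank_pos (R := ZMod p) (M := ZMod p ⊗[ℤ] A)

lemma aux_prime (p N : ℕ) (hp : p.Prime) (hpodd : Odd p) (hN : N.Prime) (hNmod : N % p = 1) :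
    ∃ q : ℕ, q.Prime ∧ ¬ q ∣ N ∧ ¬ q ∣ p ∧ p.Coprime (q - 1) ∧ (q : ZMod N) ≠ 0 ∧
      ∀ y : ZMod N, y ^ p ≠ (q : ZMod N) := by
  have := Fact.mk hp
  have := Fact.mk hN
  have hNp : N ≠ p := by rintro rfl; simp at hNmod
  have hdvd : p ∣ N - 1 := (Nat.modEq_iff_dvd' hN.one_le).mp (by
    rw [Nat.ModEq, hNmod, Nat.mod_eq_of_lt hp.one_lt])
  obtain ⟨g, hg⟩ : ∃ g : (ZMod N)ˣ, ∀ y : (ZMod N)ˣ, y ^ p ≠ g := by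
    by_contra! hcon
    have hsurj : Function.Surjective (fun y : (ZMod N)ˣ => y ^ p) := hcon
    have hinj := Finite.injective_iff_surjective.mpr hsurj
    obtain ⟨g, hg⟩ := exists_prime_orderOf_dvd_card (G := (ZMod N)ˣ) p
      (by rwa [ZMod.card_units])
    have : g = 1 := hinj (by simp [← hg, pow_orderOf_eq_one])
    rw [this, orderOf_one] at hg
    exact hp.one_lt.ne hg
  have hcop : N.Coprime p := (Nat.coprime_primes hN hp).mpr hNp
  let e := ZMod.chineseRemainder hcop
  let a : ZMod (N * p) := e.symm ((g : ZMod N), (-1 : ZMod p))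
  have ha : IsUnit a := by
    apply IsUnit.map e.symm
    rw [Prod.isUnit_iff]
    exact ⟨g.isUnit, isUnit_one.neg⟩
  have : NeZero (N * p) := ⟨mul_ne_zero hN.ne_zero hp.ne_zero⟩
  obtain ⟨q, hqgt, hq, hqa⟩ := Nat.forall_exists_prime_gt_and_eq_mod ha (N * p)
  have he : e (q : ZMod (N * p)) = ((g : ZMod N), (-1 : ZMod p)) := by
    rw [hqa]; exact e.apply_symm_apply _
  rw [map_natCast] at he
  have h1 : (q : ZMod N) = g := congrArg Prod.fst he
  have h2 : (q : ZMod p) = -1 := congrArg Prod.snd he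
  have hqN : N < q := lt_of_le_of_lt (Nat.le_mul_of_pos_right _ hp.pos) hqgt
  have hqp : p < q := lt_of_le_of_lt (Nat.le_mul_of_pos_left _ hN.pos) hqgt
  refine ⟨q, hq, fun h => absurd (Nat.le_of_dvd hN.pos h) (by omega),
    fun h => absurd (Nat.le_of_dvd hp.pos h) (by omega), ?_, ?_, ?_⟩
  · rw [hp.coprime_iff_not_dvd]
    intro h
    rw [← ZMod.natCast_eq_zero_iff, Nat.cast_sub hq.one_le, h2] at h
    have h3 : ((2 : ℕ) : ZMod p) = 0 := by
      push_cast at h ⊢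
      linear_combination -h
    rw [ZMod.natCast_eq_zero_iff, Nat.prime_dvd_prime_iff_eq hp Nat.prime_two] at h3
    subst h3
    exact absurd hpodd (by decide)
  · rw [h1]; exact g.ne_zero
  · intro y hy
    rw [h1] at hy
    have hy0 : y ≠ 0 := by
      rintro rfl
      rw [zero_pow hp.ne_zero] at hy
      exact g.ne_zero hy.symm
    exact hg (Units.mk0 y hy0) (Units.ext (by simpa using hy))

lemma aux_root (p N q : ℕ) (hq : q.Prime) (hqN : ¬ q ∣ N) (hqp : ¬ q ∣ p) (hp0 : p ≠ 0)
    (hcop : p.Coprime (q - 1)) :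
    ∃ r : ℤ, (q : ℤ) ∣ N - r ^ p ∧ ¬ (q : ℤ) ^ 2 ∣ N - r ^ p := by
  have := Fact.mk hq
  have hN0 : (N : ZMod q) ≠ 0 := by rwa [Ne, ZMod.natCast_eq_zero_iff]
  have hc : (Nat.card (ZMod q)ˣ).Coprime p := by
    rw [Nat.card_eq_fintype_card, ZMod.card_units]; exact hcop.symm
  obtain ⟨u, hu⟩ := (powCoprime hc).surjective (Units.mk0 _ hN0)
  have hu' : (u : ZMod q) ^ p = N := by
    have := congrArg Units.val hu
    simpa using this
  obtain ⟨r, hr⟩ := ZMod.intCast_surjective (u : ZMod q)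
  have hrq : (q : ℤ) ∣ N - r ^ p := by
    rw [← ZMod.intCast_zmod_eq_zero_iff_dvd]
    push_cast
    rw [hr, hu', sub_self]
  by_cases h2 : (q : ℤ) ^ 2 ∣ N - r ^ p
  · refine ⟨r + q, ?_, ?_⟩
    · rw [← ZMod.intCast_zmod_eq_zero_iff_dvd]
      push_cast
      rw [hr, ZMod.natCast_self, add_zero, hu', sub_self]
    · intro h3
      obtain ⟨k, hk⟩ := Polynomial.powAddExpansion r (q : ℤ) p
      rw [hk] at h3
      have h4 : (q : ℤ) ^ 2 ∣ (p * r ^ (p - 1)) * q := by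
        have h8 := dvd_sub (dvd_sub h2 h3) (dvd_mul_left ((q : ℤ) ^ 2) k)
        have h9 : (N : ℤ) - r ^ p - (N - (r ^ p + p * r ^ (p - 1) * q + k * (q : ℤ) ^ 2))
            - k * (q : ℤ) ^ 2 = (p * r ^ (p - 1)) * q := by ring
        rwa [h9] at h8
      rw [sq] at h4
      have h5 : (q : ℤ) ∣ p * r ^ (p - 1) :=
        Int.dvd_of_mul_dvd_mul_right (by exact_mod_cast hq.ne_zero) h4
      rcases (Nat.prime_iff_prime_int.mp hq).dvd_or_dvd h5 with h6 | h6
      · exact hqp (by exact_mod_cast h6)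
      · have h7 := (Nat.prime_iff_prime_int.mp hq).dvd_of_dvd_pow h6
        rw [← ZMod.intCast_zmod_eq_zero_iff_dvd, hr] at h7
        exact u.ne_zero h7
  · exact ⟨r, hrq, h2⟩

theorem aux_main (p N : ℕ) (hp : p.Prime) (hpodd : Odd p)
    (hN : N.Prime) (hNmod : N % p = 1)
    (K : Type*) [Field K] [NumberField K]
    (α : K) (hα : α ^ p = (N : K)) (hKdeg : Module.finrank ℚ K = p) :
      p ∣ Nat.card (ClassGroup (NumberField.RingOfIntegers K)) := by
  have := Fact.mk hN
  obtain ⟨q, hq, hqN, hqp, hcop, hq0, hqpow⟩ := aux_prime p N hp hpodd hN hNmod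
  obtain ⟨r, hr1, hr2⟩ := aux_root p N q hq hqN hqp hp.ne_zero hcop
  have hαint : IsIntegral ℤ α := by
    apply IsIntegral.of_pow hp.pos
    rw [hα]
    have h0 : IsIntegral ℤ (algebraMap ℤ K (N : ℤ)) := isIntegral_algebraMap
    simpa using h0
  obtain ⟨β, hβα⟩ : ∃ β : NumberField.RingOfIntegers K, (β : K) = α := ⟨⟨α, hαint⟩, rfl⟩
  have hβ : β ^ p = (N : NumberField.RingOfIntegers K) := by
    apply NumberField.RingOfIntegers.ext
    simp [hβα, hα]
  have hnorm := aux_norm_int p N hp hpodd hN K β hβ hKdeg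
  have hnormβ : (Algebra.norm ℤ β).natAbs = N := by
    have := hnorm 0
    rw [Int.cast_zero, sub_zero, zero_pow hp.ne_zero, sub_zero] at this
    rw [this]; simp
  -- an ideal of norm `q`
  obtain ⟨P, hPn⟩ : ∃ P : Ideal (NumberField.RingOfIntegers K), Ideal.absNorm P = q := by
    have hI : Ideal.absNorm (Ideal.span {β - (r : NumberField.RingOfIntegers K)})
        = ((N : ℤ) - r ^ p).natAbs := by
      rw [Ideal.absNorm_span_singleton, hnorm]
    obtain ⟨P, hPmax, hPu, hPd⟩ := Ideal.exists_isMaximal_dvd_of_dvd_absNorm' hq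
      (Ideal.span {β - (r : NumberField.RingOfIntegers K)})
      (by rw [hI]; exact Int.natCast_dvd.mp hr1)
    refine ⟨P, ?_⟩
    have : P.LiesOver (Ideal.span {(q : ℤ)}) := ⟨hPu.symm⟩
    have h1 := Ideal.absNorm_eq_pow_inertiaDeg' P hq
    set f := (Ideal.span {(q : ℤ)}).inertiaDeg' P
    have h2 : q ^ f ∣ ((N : ℤ) - r ^ p).natAbs := by
      rw [← h1, ← hI]; exact map_dvd _ hPd
    have hf2 : f < 2 := by
      by_contra! hf
      apply hr2
      have := (pow_dvd_pow q hf).trans h2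
      rw [← Int.natCast_dvd] at this
      exact_mod_cast this
    have hf0 : f ≠ 0 := by
      intro hf
      rw [hf, pow_zero, Ideal.absNorm_eq_one_iff] at h1
      exact hPmax.ne_top h1
    have : f = 1 := by omega
    rw [h1, this, pow_one]
  by_contra hnd
  set h := Nat.card (ClassGroup (NumberField.RingOfIntegers K)) with hh
  have hP0 : P ≠ ⊥ := by
    rintro rfl
    rw [Ideal.absNorm_bot] at hPn
    exact hq.ne_zero hPn.symm
  have hprin : Submodule.IsPrincipal (P ^ h) := by
    have hmem : P ∈ nonZeroDivisors (Ideal (NumberField.RingOfIntegers K)) :=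
      mem_nonZeroDivisors_of_ne_zero hP0
    rw [← ClassGroup.mk0_eq_one_iff (pow_mem hmem h)]
    have : (⟨P ^ h, pow_mem hmem h⟩ : nonZeroDivisors (Ideal (NumberField.RingOfIntegers K)))
      = ⟨P, hmem⟩ ^ h := rfl
    rw [this, map_pow, hh, pow_card_eq_one']
  obtain ⟨γ, hγ⟩ := hprin
  have hγn : (Algebra.norm ℤ γ).natAbs = q ^ h := by
    rw [← Ideal.absNorm_span_singleton, ← hPn, ← map_pow]
    exact congrArg _ hγ.symm
  obtain ⟨c, δ, hc⟩ := aux_int_rep N hN K β hnormβ γ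
  have hmod := aux_norm_mod p N hN K β (-δ) hβ hKdeg c
  rw [mul_neg, sub_neg_eq_add, ← hc] at hmod
  obtain ⟨d, hd⟩ : ∃ d : ZMod N, d ^ p = (q : ZMod N) ^ h := by
    rcases Int.natAbs_eq (Algebra.norm ℤ γ) with h1 | h1
    · rw [hγn] at h1
      rw [h1] at hmod
      exact ⟨c, by rw [← hmod]; push_cast; rfl⟩
    · rw [hγn] at h1
      rw [h1] at hmod
      refine ⟨-c, ?_⟩
      rw [hpodd.neg_pow, ← hmod]; push_cast; ring
  have hcop2 : IsCoprime (h : ℤ) (p : ℤ) := by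
    rw [Nat.isCoprime_iff_coprime]
    exact ((Nat.Prime.coprime_iff_not_dvd hp).mpr hnd).symm
  obtain ⟨u, v, huv⟩ := hcop2
  apply hqpow (d ^ u * (q : ZMod N) ^ v)
  calc (d ^ u * (q : ZMod N) ^ v) ^ p = (d ^ p) ^ u * (q : ZMod N) ^ (v * p) := by
        rw [mul_pow, ← zpow_natCast (d ^ u), ← zpow_mul, ← zpow_natCast d, ← zpow_mul,
          ← zpow_natCast ((q : ZMod N) ^ v), ← zpow_mul, mul_comm u]
    _ = (q : ZMod N) ^ (u * h + v * p) := by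
        rw [hd, zpow_add₀ hq0, ← zpow_natCast (q : ZMod N) h, ← zpow_mul, mul_comm u]
    _ = q := by rw [huv, zpow_one]



/-- For any odd prime `p` and prime `N ≡ 1 (mod p)`, one has `r_K ≥ 1`; equivalently,
`p` divides the class number of `K = ℚ(N^{1/p})`. -/
theorem statement8 (p N : ℕ) (hp : p.Prime) (hpodd : Odd p)
    (hN : N.Prime) (hNmod : N % p = 1)
    (K : Type*) [Field K] [NumberField K]
    (α : K) (hα : α ^ p = (N : K)) (hKdeg : Module.finrank ℚ K = p) :
    1 ≤ classRank p K ∧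
      p ∣ Nat.card (ClassGroup (NumberField.RingOfIntegers K)) := by
  have h := aux_main p N hp hpodd hN hNmod K α hα hKdeg
  exact ⟨aux_tensor p hp _ h, h⟩
end
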